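/- arXiv:2002.00870 — 2 statements merged into one kernel-verified Lean document; each statement's English description precedes it below -/
import Mathlib

section
/- Let 1 ≤ p < ∞ and let h : 𝕊^{m-1} × ℝ^m → ℝ be continuous with, for each ζ ∈ 𝕊^{m-1}, the function ω ↦ h(ζ,ω) coinciding on 𝔹^m with an element of ℋ_k. Set g = P_B[h] and, for 0 ≤ r < 1, g_r(η,ν) := g(rη,ν) for η ∈ 𝕊^{m-1}, ν ∈ ℝ^m. Then there exists a constant b_{m,k} > 0 depending only on m and k such that ‖g_r‖_p ≤ b_{m,k} ‖h‖_p for every 0 ≤ r < 1. -/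
noncomputable section

open MeasureTheory Metric Filter Topology
open scoped RealInnerProductSpace

/-- `ℝ^m` as a Euclidean space. -/
abbrev Evec (m : ℕ) : Type := EuclideanSpace ℝ (Fin m)

/-- Partial derivative in the `i`-th coordinate direction. -/
def pdv {m : ℕ} (i : Fin m) (f : Evec m → ℝ) (x : Evec m) : ℝ :=
  fderiv ℝ f x (EuclideanSpace.single i 1)

/-- Euclidean Laplacian on `ℝ^m`. -/
def lapl {m : ℕ} (f : Evec m → ℝ) (x : Evec m) : ℝ :=
  ∑ i : Fin m, pdv i (pdv i f) x

/-- `p` is a real-valued polynomial function on `ℝ^m`, homogeneous of degree `k` and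
harmonic; i.e. `p ∈ ℋ_k`. -/
def IsHk (m k : ℕ) (p : Evec m → ℝ) : Prop :=
  (∃ P : MvPolynomial (Fin m) ℝ, ∀ x : Evec m, p x = MvPolynomial.eval (fun i => x i) P) ∧
  (∀ (c : ℝ) (x : Evec m), p (c • x) = c ^ k * p x) ∧
  (∀ x : Evec m, lapl p x = 0)

/-- The surface measure `dS` on the unit sphere `𝕊^{m-1}`, as a measure on `ℝ^m`. -/
def sphereM (m : ℕ) : Measure (Evec m) :=
  Measure.map Subtype.val ((volume : Measure (Evec m)).toSphere)

/-- `ω_m`, the surface area of the unit sphere `𝕊^{m-1}`. -/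
def omegaS (m : ℕ) : ℝ := (sphereM m Set.univ).toReal

/-- The constant `c_{m,k} = 2(m+2k-2)/((m-2)ω_m)`. -/
def cmk (m k : ℕ) : ℝ := 2 * ((m : ℝ) + 2 * k - 2) / (((m : ℝ) - 2) * omegaS m)

/-- The reflection `R_a(u) = u - 2⟨a,u⟩a/|a|²` (in Clifford notation `a u a/|a|²`). -/
def reflv {m : ℕ} (a u : Evec m) : Evec m :=
  u - (2 * ⟪a, u⟫ / ‖a‖ ^ 2) • a

/-- `dim ℋ_k`. -/
def hdim (m k : ℕ) : ℕ :=
  Nat.choose (m + k - 1) (m - 1) - Nat.choose (m + k - 3) (m - 1)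

/-- `Z` is the reproducing kernel `Z_k` of `ℋ_k` on the unit sphere: a symmetric,
rotation invariant kernel, bounded by `dim ℋ_k` on the unit ball, belonging to `ℋ_k`
in the first variable and reproducing elements of `ℋ_k` from their spherical values. -/
def IsZk (m k : ℕ) (Z : Evec m → Evec m → ℝ) : Prop :=
  (∀ v : Evec m, IsHk m k (fun u => Z u v)) ∧
  (∀ p : Evec m → ℝ, IsHk m k p → ∀ v : Evec m, (∫ u, Z u v * p u ∂(sphereM m)) = p v) ∧
  (∀ u v : Evec m, Z u v = Z v u) ∧
  (∀ u v : Evec m, ‖u‖ ≤ 1 → ‖v‖ ≤ 1 → |Z u v| ≤ (hdim m k : ℝ)) ∧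
  (∀ (A : Evec m ≃ₗᵢ[ℝ] Evec m) (u v : Evec m), Z (A u) (A v) = Z u v)

/-- The point `(x', y) ∈ ℝ^{d+1}` with first `d` coordinates `x'` and last coordinate `y`. -/
def upP (d : ℕ) (x' : Evec d) (y : ℝ) : Evec (d + 1) :=
  (EuclideanSpace.equiv (Fin (d + 1)) ℝ).symm
    (Fin.snoc (⇑(EuclideanSpace.equiv (Fin d) ℝ) x') y)

/-- The first `d` coordinates of a point of `ℝ^{d+1}`. -/
def downP (d : ℕ) (x : Evec (d + 1)) : Evec d :=
  (EuclideanSpace.equiv (Fin d) ℝ).symm (fun i => x (Fin.castSucc i))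

/-- The last coordinate of a point of `ℝ^{d+1}`. -/
def lastP (d : ℕ) (x : Evec (d + 1)) : ℝ := x (Fin.last d)

/-- The Poisson kernel `P_H` for bosonic Laplacians in the upper half-space `ℝ^{d+1}_+`,
`P_H(x,t,u,v) = c_{m,k} (y/|x-t|^m) Z_k(R_{x-t}(u), v)` with `m = d+1`, `x = (x',y)`,
`t = (t',0)`. -/
def PH (d k : ℕ) (Z : Evec (d + 1) → Evec (d + 1) → ℝ) (x' : Evec d) (y : ℝ)
    (t' : Evec d) (u v : Evec (d + 1)) : ℝ :=
  cmk (d + 1) k * (y / ‖upP d x' y - upP d t' 0‖ ^ (d + 1)) *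
    Z (reflv (upP d x' y - upP d t' 0) u) v

/-- The Poisson integral `P_H[f]` in the upper half-space. -/
def PHint (d k : ℕ) (Z : Evec (d + 1) → Evec (d + 1) → ℝ)
    (f : Evec d → Evec (d + 1) → ℝ) (x' : Evec d) (y : ℝ) (v : Evec (d + 1)) : ℝ :=
  ∫ t' : Evec d, (∫ u, PH d k Z x' y t' u v * f t' u ∂(sphereM (d + 1)))

/-- The Poisson kernel `P_B` for bosonic Laplacians in the unit ball. -/
def PB (m k : ℕ) (Z : Evec m → Evec m → ℝ) (x ζ ω ν : Evec m) : ℝ :=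
  (cmk m k / 2) * ((1 - ‖x‖ ^ 2) / ‖x - ζ‖ ^ m) * Z (reflv (x - ζ) ω) ν

/-- The Poisson integral `P_B[h]` in the unit ball. -/
def PBint (m k : ℕ) (Z : Evec m → Evec m → ℝ) (h : Evec m → Evec m → ℝ)
    (x ν : Evec m) : ℝ :=
  ∫ ζ, (∫ ω, PB m k Z x ζ ω ν * h ζ ω ∂(sphereM m)) ∂(sphereM m)

/-- Partial derivative in the first (`x`) variable. -/
def pd1 {m : ℕ} (i : Fin m) (f : Evec m → Evec m → ℝ) : Evec m → Evec m → ℝ :=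
  fun x u => fderiv ℝ (fun x₁ => f x₁ u) x (EuclideanSpace.single i 1)

/-- Partial derivative in the second (`u`) variable. -/
def pd2 {m : ℕ} (i : Fin m) (f : Evec m → Evec m → ℝ) : Evec m → Evec m → ℝ :=
  fun x u => fderiv ℝ (fun u₁ => f x u₁) u (EuclideanSpace.single i 1)

/-- The bosonic Laplacian `𝒟_k`. -/
def Dk (m k : ℕ) (f : Evec m → Evec m → ℝ) : Evec m → Evec m → ℝ := fun x u =>
  (∑ i : Fin m, pd1 i (pd1 i f) x u)
    - (4 / ((m : ℝ) + 2 * k - 2)) *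
        ∑ i : Fin m, ∑ j : Fin m, u i * pd1 i (pd2 j (pd1 j f)) x u
    + (4 * ‖u‖ ^ 2 / (((m : ℝ) + 2 * k - 2) * ((m : ℝ) + 2 * k - 4))) *
        ∑ i : Fin m, ∑ j : Fin m, pd2 i (pd1 i (pd2 j (pd1 j f))) x u

/-- `f ∈ C²(Ω×𝔹^m, ℋ_k)`: twice continuously differentiable on `Ω × 𝔹^m` and, for each
fixed `x ∈ Ω`, coinciding in the second variable with an element of `ℋ_k`. -/
def C2Hk (m k : ℕ) (Ω : Set (Evec m)) (f : Evec m → Evec m → ℝ) : Prop :=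
  ContDiffOn ℝ 2 (fun q : Evec m × Evec m => f q.1 q.2) (Ω ×ˢ ball (0 : Evec m) 1) ∧
  ∀ x ∈ Ω, ∃ q, IsHk m k q ∧ ∀ u ∈ closedBall (0 : Evec m) 1, f x u = q u

/-- The `L^p` norm `(∫_{ℝ^{m-1}} ∫_{𝕊^{m-1}} |f(x',u)|^p dS(u) dx')^{1/p}` (`m = d+1`),
valued in `ℝ≥0∞`. -/
def lpH (d : ℕ) (p : ℝ) (f : Evec d → Evec (d + 1) → ℝ) : ENNReal :=
  (∫⁻ x' : Evec d, ∫⁻ u, ENNReal.ofReal (|f x' u| ^ p) ∂(sphereM (d + 1))) ^ (1 / p)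

/-- `f ∈ L^p(ℝ^{m-1}×𝔹^m, ℋ_k)` (`m = d+1`). -/
def MemLpH (d k : ℕ) (p : ℝ) (f : Evec d → Evec (d + 1) → ℝ) : Prop :=
  Measurable (fun q : Evec d × Evec (d + 1) => f q.1 q.2) ∧
  (∀ x' : Evec d, ∃ q, IsHk (d + 1) k q ∧
    ∀ u ∈ closedBall (0 : Evec (d + 1)) 1, f x' u = q u) ∧
  lpH d p f < ⊤

/-- The `L^p` norm `(∫_{𝕊^{m-1}} ∫_{𝕊^{m-1}} |h(ζ,ω)|^p dS(ω) dS(ζ))^{1/p}`,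
valued in `ℝ≥0∞`. -/
def lpS (m : ℕ) (p : ℝ) (h : Evec m → Evec m → ℝ) : ENNReal :=
  (∫⁻ ζ, ∫⁻ ω, ENNReal.ofReal (|h ζ ω| ^ p) ∂(sphereM m) ∂(sphereM m)) ^ (1 / p)

/-- `h ∈ L^p(𝕊^{m-1}×𝔹^m, ℋ_k)`. -/
def MemLpS (m k : ℕ) (p : ℝ) (h : Evec m → Evec m → ℝ) : Prop :=
  Measurable (fun q : Evec m × Evec m => h q.1 q.2) ∧
  (∀ ζ : Evec m, ‖ζ‖ = 1 → ∃ q, IsHk m k q ∧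
    ∀ ω ∈ closedBall (0 : Evec m) 1, h ζ ω = q ω) ∧
  lpS m p h < ⊤

/-- Iterated partial derivative `D_x^α` in the first variable, for a multi-index `α ∈ ℕ^m`. -/
def Dx {m : ℕ} (α : Fin m → ℕ) (f : Evec m → Evec m → ℝ) : Evec m → Evec m → ℝ :=
  (List.finRange m).foldr (fun i g => (pd1 i)^[α i] g) f

/-- Iterated partial derivative `D_ν^β` in the second variable, for a multi-index `β ∈ ℕ^m`. -/
def Dv {m : ℕ} (β : Fin m → ℕ) (f : Evec m → Evec m → ℝ) : Evec m → Evec m → ℝ :=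
  (List.finRange m).foldr (fun i g => (pd2 i)^[β i] g) f

lemma norm_reflv {m : ℕ} (a u : Evec m) : ‖reflv a u‖ = ‖u‖ := by
  by_cases ha : a = 0
  · simp [reflv, ha]
  · have ha' : ‖a‖ ^ 2 ≠ 0 := by simpa using ha
    have h : ‖reflv a u‖ ^ 2 = ‖u‖ ^ 2 := by
      rw [reflv, norm_sub_sq_real, norm_smul, inner_smul_right, real_inner_comm, mul_pow,
        Real.norm_eq_abs, sq_abs]
      field_simp
      ring
    exact (pow_left_inj₀ (norm_nonneg _) (norm_nonneg _) two_ne_zero).1 h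

lemma norm_smul_sub_comm {m : ℕ} {x y : Evec m} (hx : ‖x‖ = 1) (hy : ‖y‖ = 1) (r : ℝ) :
    ‖r • x - y‖ = ‖r • y - x‖ := by
  have h : ‖r • x - y‖ ^ 2 = ‖r • y - x‖ ^ 2 := by
    rw [norm_sub_sq_real, norm_sub_sq_real, norm_smul, norm_smul, real_inner_smul_left,
      real_inner_smul_left, real_inner_comm, hx, hy]
  exact (pow_left_inj₀ (norm_nonneg _) (norm_nonneg _) two_ne_zero).1 h

instance isFiniteMeasure_sphereM (m : ℕ) : IsFiniteMeasure (sphereM m) := by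
  unfold sphereM; infer_instance

lemma ae_norm_eq_one_sphereM (m : ℕ) : ∀ᵐ x ∂(sphereM m), ‖x‖ = 1 := by
  rw [sphereM, ae_map_iff measurable_subtype_coe.aemeasurable
    (measurableSet_eq_fun measurable_norm measurable_const)]
  exact Eventually.of_forall fun x => by simp

open scoped Pointwise in
/-- Spherical caps of radius `t` have measure `O(t ^ (m - 1))`; stated multiplied by `t`. -/
lemma ofReal_mul_sphereM_ball_le {m : ℕ} (hm : 1 ≤ m) (η : Evec m) {t : ℝ}
    (ht : 0 < t) (ht1 : t ≤ 1) :
    ENNReal.ofReal t * sphereM m (ball η t) ≤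
      m * (ENNReal.ofReal ((2 * t) ^ m) * volume (ball (0 : Evec m) 1)) := by
  have hs : MeasurableSet ((Subtype.val : sphere (0 : Evec m) 1 → Evec m) ⁻¹' ball η t) :=
    measurable_subtype_coe measurableSet_ball
  rw [sphereM, Measure.map_apply measurable_subtype_coe measurableSet_ball,
    Measure.toSphere_apply' _ hs]
  set s : Set (Evec m) :=
    Subtype.val '' ((Subtype.val : sphere (0 : Evec m) 1 → Evec m) ⁻¹' ball η t)
  set V := volume (Set.Ioo (0 : ℝ) 1 • s)
  have hs1 : ∀ x ∈ s, ‖x‖ = 1 ∧ dist x η < t := by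
    rintro _ ⟨y, hy, rfl⟩
    exact ⟨by simp, hy⟩
  have hVtop : V ≠ ⊤ := by
    refine ((measure_mono ?_).trans_lt (measure_ball_lt_top (x := (0 : Evec m)) (r := 1))).ne
    rintro _ ⟨ρ, hρ, x, hx, rfl⟩
    simpa [norm_smul, (hs1 x hx).1, abs_of_pos hρ.1] using hρ.2
  have hcov : Set.Ioo (0 : ℝ) 1 • s ⊆
      (1 - t) • (Set.Ioo (0 : ℝ) 1 • s) ∪ closedBall η (2 * t) := by
    rintro _ ⟨ρ, hρ, x, hx, rfl⟩
    rcases lt_or_ge ρ (1 - t) with h | h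
    · left
      have h0 : 0 < 1 - t := hρ.1.trans h
      refine ⟨(ρ / (1 - t)) • x, ⟨_, ⟨div_pos hρ.1 h0, (div_lt_one h0).2 h⟩, x, hx, rfl⟩, ?_⟩
      simp only [smul_smul]
      rw [mul_div_cancel₀ _ h0.ne']
    · right
      rw [mem_closedBall]
      have h1 : dist (ρ • x) x ≤ t := by
        rw [dist_eq_norm, show ρ • x - x = (ρ - 1) • x by module, norm_smul, (hs1 x hx).1,
          Real.norm_eq_abs, abs_of_neg (by linarith [hρ.2])]
        linarith
      linarith [dist_triangle (ρ • x) x η, (hs1 x hx).2]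
  have hle : V ≤ ENNReal.ofReal (1 - t) * V +
      ENNReal.ofReal ((2 * t) ^ m) * volume (ball (0 : Evec m) 1) := by
    refine (measure_mono hcov).trans ((measure_union_le _ _).trans ?_)
    rw [Measure.addHaar_smul, Measure.addHaar_closedBall _ _ (by positivity), finrank_euclideanSpace,
      Fintype.card_fin]
    gcongr
    rw [abs_of_nonneg (pow_nonneg (by linarith) _)]
    exact pow_le_of_le_one (by linarith) (by linarith) (by omega)
  have hsplit : V = ENNReal.ofReal (1 - t) * V + ENNReal.ofReal t * V := by
    rw [← add_mul, ← ENNReal.ofReal_add (by linarith) ht.le]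
    simp
  have hfin : ENNReal.ofReal (1 - t) * V ≠ ⊤ := ENNReal.mul_ne_top ENNReal.ofReal_ne_top hVtop
  have hkey : ENNReal.ofReal t * V ≤
      ENNReal.ofReal ((2 * t) ^ m) * volume (ball (0 : Evec m) 1) := by
    refine (ENNReal.add_le_add_iff_left hfin).1 ?_
    rw [← hsplit]
    exact hle
  rw [finrank_euclideanSpace, Fintype.card_fin, mul_left_comm]
  exact mul_le_mul_right hkey _

lemma exists_sphereM_ball_le {m : ℕ} (hm : 1 ≤ m) :
    ∃ C : ℝ, 0 ≤ C ∧ ∀ η : Evec m, ∀ t : ℝ, 0 < t →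
      sphereM m (ball η t) ≤ ENNReal.ofReal (C * t ^ (m - 1)) := by
  set W : ℝ := (volume (ball (0 : Evec m) 1)).toReal
  have hW : volume (ball (0 : Evec m) 1) = ENNReal.ofReal W :=
    (ENNReal.ofReal_toReal measure_ball_lt_top.ne).symm
  have hS : sphereM m Set.univ = ENNReal.ofReal (omegaS m) :=
    (ENNReal.ofReal_toReal (measure_ne_top _ _)).symm
  have hW0 : 0 ≤ W := ENNReal.toReal_nonneg
  have hS0 : 0 ≤ omegaS m := ENNReal.toReal_nonneg
  refine ⟨m * 2 ^ m * W + omegaS m, by positivity, fun η t ht => ?_⟩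
  rcases le_total t 1 with h1 | h1
  · have h := ofReal_mul_sphereM_ball_le hm η ht h1
    have ht' : ENNReal.ofReal t ≠ 0 := by simpa using ht
    rw [hW, ← ENNReal.ofReal_mul (by positivity), ← ENNReal.ofReal_natCast,
      ← ENNReal.ofReal_mul (by positivity)] at h
    rw [← ENNReal.mul_le_mul_iff_right ht' ENNReal.ofReal_ne_top]
    refine h.trans ?_
    rw [← ENNReal.ofReal_mul ht.le]
    apply ENNReal.ofReal_le_ofReal
    have e : t ^ m = t * t ^ (m - 1) := by rw [← pow_succ', Nat.sub_add_cancel hm]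
    rw [mul_pow, e]
    nlinarith [mul_nonneg hS0 (mul_nonneg ht.le (pow_nonneg ht.le (m - 1)))]
  · refine (measure_mono (Set.subset_univ _)).trans ?_
    rw [hS]
    apply ENNReal.ofReal_le_ofReal
    have : 1 ≤ t ^ (m - 1) := one_le_pow₀ h1
    have : 0 ≤ m * 2 ^ m * W := by positivity
    nlinarith

/-- The classical Poisson kernel of the ball has uniformly bounded mass. -/
lemma exists_lintegral_poisson_le {m : ℕ} (hm : 1 ≤ m) :
    ∃ A : ℝ, 0 ≤ A ∧ ∀ η : Evec m, ‖η‖ = 1 → ∀ r : ℝ, 0 ≤ r → r < 1 →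
      ∫⁻ ζ, ENNReal.ofReal ((1 - r ^ 2) / ‖r • η - ζ‖ ^ m) ∂(sphereM m) ≤ ENNReal.ofReal A := by
  obtain ⟨C, hC, hcap⟩ := exists_sphereM_ball_le hm
  refine ⟨2 * C * 4 ^ (m - 1) * 2, by positivity, fun η hη r hr hr1 => ?_⟩
  set δ := 1 - r with hδ
  have hδ0 : 0 < δ := by linarith
  have hxη : ‖r • η - η‖ = δ := by
    rw [show r • η - η = (r - 1) • η by module, norm_smul, hη, Real.norm_eq_abs,
      abs_of_neg (by linarith)]
    linarith
  let a : ℕ → ℝ := fun j => 2 * δ / (2 ^ j * δ) ^ m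
  let U : ℕ → Set (Evec m) := fun j => ball η (4 * (2 ^ j * δ))
  have hpt : ∀ᵐ ζ ∂(sphereM m), ENNReal.ofReal ((1 - r ^ 2) / ‖r • η - ζ‖ ^ m) ≤
      ∑' j, (U j).indicator (fun _ => ENNReal.ofReal (a j)) ζ := by
    filter_upwards [ae_norm_eq_one_sphereM m] with ζ hζ
    have hd : δ ≤ ‖r • η - ζ‖ := by
      have := norm_sub_norm_le ζ (r • η)
      rw [norm_smul, hη, hζ, Real.norm_eq_abs, abs_of_nonneg hr, norm_sub_rev] at this
      linarith
    obtain ⟨j, hj, hj'⟩ := exists_nat_pow_near ((one_le_div hδ0).2 hd) (one_lt_two (α := ℝ))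
    rw [le_div_iff₀ hδ0] at hj
    rw [div_lt_iff₀ hδ0, pow_succ] at hj'
    have hζU : ζ ∈ U j := by
      rw [mem_ball, dist_eq_norm]
      have h1 : ‖ζ - η‖ ≤ ‖r • η - ζ‖ + ‖r • η - η‖ := by
        rw [← norm_sub_rev ζ]
        exact norm_sub_le_norm_sub_add_norm_sub _ _ _
      have h2 : δ ≤ 2 ^ j * δ := le_mul_of_one_le_left hδ0.le (one_le_pow₀ one_le_two)
      linarith
    refine le_trans ?_ (ENNReal.le_tsum j)
    rw [Set.indicator_of_mem hζU]
    apply ENNReal.ofReal_le_ofReal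
    have : 1 - r ^ 2 ≤ 2 * δ := by nlinarith
    have : 0 < 2 ^ j * δ := by positivity
    simp only [a]
    gcongr
  refine (lintegral_mono_ae hpt).trans ?_
  rw [lintegral_tsum fun j => (measurable_const.indicator measurableSet_ball).aemeasurable]
  have hterm : ∀ j, ∫⁻ ζ, (U j).indicator (fun _ => ENNReal.ofReal (a j)) ζ ∂(sphereM m) ≤
      ENNReal.ofReal (2 * C * 4 ^ (m - 1)) * 2⁻¹ ^ j := by
    intro j
    have hs : 0 < 2 ^ j * δ := by positivity
    rw [lintegral_indicator_const measurableSet_ball]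
    refine (mul_le_mul_right (hcap η _ (by positivity)) _).trans ?_
    have h2 : (2⁻¹ : ENNReal) ^ j = ENNReal.ofReal (2⁻¹ ^ j) := by
      rw [ENNReal.ofReal_pow (by norm_num), ENNReal.ofReal_inv_of_pos two_pos]
      simp
    rw [h2, ← ENNReal.ofReal_mul (by positivity), ← ENNReal.ofReal_mul (by positivity)]
    apply ENNReal.ofReal_le_ofReal
    have e : (2 ^ j * δ) ^ m = (2 ^ j * δ) * (2 ^ j * δ) ^ (m - 1) := by
      rw [← pow_succ', Nat.sub_add_cancel hm]
    simp only [a]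
    rw [e, mul_pow 4]
    apply le_of_eq
    have h0 : (2 ^ j * δ) ^ (m - 1) ≠ 0 := by positivity
    generalize (2 ^ j * δ) ^ (m - 1) = q at *
    rw [inv_pow]
    field_simp
  refine (ENNReal.tsum_le_tsum hterm).trans ?_
  rw [ENNReal.tsum_mul_left, ENNReal.tsum_geometric_two,
    ENNReal.ofReal_mul (p := 2 * C * 4 ^ (m - 1)) (by positivity)]
  simp

/-- Jensen's inequality against the finite measure with density `w`. -/
lemma lintegral_mul_rpow_le {α : Type*} [MeasurableSpace α] {μ : Measure α}
    {w f : α → ENNReal} (hw : Measurable w) (hf : Measurable f) {p : ℝ} (hp : 1 ≤ p) :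
    (∫⁻ x, w x * f x ∂μ) ^ p ≤ (∫⁻ x, w x ∂μ) ^ (p - 1) * ∫⁻ x, w x * f x ^ p ∂μ := by
  have hp0 : 0 < p := by linarith
  have h := eLpNorm'_le_eLpNorm'_mul_rpow_measure_univ (μ := μ.withDensity w) (f := f)
    one_pos hp hf.aestronglyMeasurable
  simp only [eLpNorm'_eq_lintegral_enorm, enorm_eq_self, ENNReal.rpow_one, div_one,
    withDensity_apply _ MeasurableSet.univ, Measure.restrict_univ] at h
  rw [lintegral_withDensity_eq_lintegral_mul _ hw hf,
    lintegral_withDensity_eq_lintegral_mul _ hw (hf.pow_const p)] at h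
  refine (ENNReal.rpow_le_rpow h hp0.le).trans_eq ?_
  rw [ENNReal.mul_rpow_of_nonneg _ _ hp0.le, ← ENNReal.rpow_mul, ← ENNReal.rpow_mul,
    one_div_mul_cancel hp0.ne', ENNReal.rpow_one, sub_mul, one_mul, one_div_mul_cancel hp0.ne',
    mul_comm]
  rfl

/-- Schur's test for a nonnegative kernel with both marginals bounded by `A`. -/
lemma lintegral_lintegral_mul_rpow_le {α β : Type*} [MeasurableSpace α] [MeasurableSpace β]
    {μ : Measure α} {ν : Measure β} [SFinite μ] [SFinite ν] {K : α → β → ENNReal}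
    (hK : Measurable (Function.uncurry K)) {f : β → ENNReal} (hf : Measurable f) {A : ENNReal}
    (hA : ∀ᵐ x ∂μ, ∫⁻ y, K x y ∂ν ≤ A) (hA' : ∀ᵐ y ∂ν, ∫⁻ x, K x y ∂μ ≤ A)
    {p : ℝ} (hp : 1 ≤ p) :
    ∫⁻ x, (∫⁻ y, K x y * f y ∂ν) ^ p ∂μ ≤ A ^ p * ∫⁻ y, f y ^ p ∂ν := by
  have hKf : Measurable (Function.uncurry fun x y => K x y * f y ^ p) :=
    hK.mul ((hf.comp measurable_snd).pow_const p)
  calc ∫⁻ x, (∫⁻ y, K x y * f y ∂ν) ^ p ∂μ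
      ≤ ∫⁻ x, A ^ (p - 1) * ∫⁻ y, K x y * f y ^ p ∂ν ∂μ := by
        refine lintegral_mono_ae ?_
        filter_upwards [hA] with x hx
        refine (lintegral_mul_rpow_le (hK.of_uncurry_left (x := x)) hf hp).trans ?_
        gcongr
    _ = A ^ (p - 1) * ∫⁻ y, ∫⁻ x, K x y * f y ^ p ∂μ ∂ν := by
        rw [lintegral_const_mul _ hKf.lintegral_prod_right,
          lintegral_lintegral_swap hKf.aemeasurable]
    _ ≤ A ^ (p - 1) * ∫⁻ y, A * f y ^ p ∂ν := by
        refine mul_le_mul_right (lintegral_mono_ae ?_) _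
        filter_upwards [hA'] with y hy
        rw [lintegral_mul_const _ (hK.of_uncurry_right (y := y))]
        gcongr
    _ = A ^ p * ∫⁻ y, f y ^ p ∂ν := by
        rw [lintegral_const_mul _ (hf.pow_const p), ← mul_assoc]
        congr 1
        conv_lhs => rw [← ENNReal.rpow_one A, ← ENNReal.rpow_mul, one_mul]
        rw [← ENNReal.rpow_add_of_nonneg _ _ (by linarith) zero_le_one, sub_add_cancel]

lemma lintegral_prod_comp_fst {α β : Type*} [MeasurableSpace α] [MeasurableSpace β]
    {μ : Measure α} {ν : Measure β} [SFinite ν] {f : α → ENNReal} (hf : Measurable f) :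
    ∫⁻ q, f q.1 ∂(μ.prod ν) = (∫⁻ x, f x ∂μ) * ν Set.univ := by
  rw [lintegral_prod (fun q => f q.1) (hf.comp measurable_fst).aemeasurable]
  simp only [lintegral_const]
  rw [lintegral_mul_const _ hf]

lemma enorm_PB_le {m k : ℕ} {Z : Evec m → Evec m → ℝ} (hZ : IsZk m k Z) {r : ℝ} (hr : 0 ≤ r)
    (hr1 : r < 1) {η ζ ω ν : Evec m} (hη : ‖η‖ = 1) (hω : ‖ω‖ = 1) (hν : ‖ν‖ = 1) :
    ‖PB m k Z (r • η) ζ ω ν‖ₑ ≤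
      ENNReal.ofReal (|cmk m k / 2| * hdim m k) *
        ENNReal.ofReal ((1 - r ^ 2) / ‖r • η - ζ‖ ^ m) := by
  have hr2 : 0 ≤ 1 - r ^ 2 := by nlinarith
  rw [← ENNReal.ofReal_mul (by positivity), Real.enorm_eq_ofReal_abs]
  apply ENNReal.ofReal_le_ofReal
  have hzb := hZ.2.2.2.1 (reflv (r • η - ζ) ω) ν (by rw [norm_reflv, hω]) hν.le
  rw [PB, norm_smul, hη, mul_one, Real.norm_eq_abs, sq_abs, abs_mul, abs_mul,
    abs_of_nonneg (a := (1 - r ^ 2) / _) (by positivity), mul_right_comm]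
  gcongr

/-- Theorem `thmbdd`, case `1 ≤ p < ∞`: dilation bound for the
unit-ball Poisson integral of continuous data, with a constant depending only on
`m` and `k`. -/
theorem stmt_9 (m k : ℕ) (hm : 3 ≤ m) (hk : 1 ≤ k)
    (Z : Evec m → Evec m → ℝ) (hZ : IsZk m k Z) :
    ∃ b : ℝ, 0 < b ∧
      ∀ p : ℝ, 1 ≤ p →
        ∀ h : Evec m → Evec m → ℝ,
          ContinuousOn (fun q : Evec m × Evec m => h q.1 q.2)
            (sphere (0 : Evec m) 1 ×ˢ (Set.univ : Set (Evec m))) →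
          (∀ ζ : Evec m, ‖ζ‖ = 1 → ∃ q, IsHk m k q ∧
            ∀ ω ∈ ball (0 : Evec m) 1, h ζ ω = q ω) →
          ∀ r : ℝ, 0 ≤ r → r < 1 →
            lpS m p (fun η ν => PBint m k Z h (r • η) ν) ≤
              ENNReal.ofReal b * lpS m p h := by
  classical
  obtain ⟨A, hA0, hA⟩ := exists_lintegral_poisson_le (m := m) (by omega)
  set μ := sphereM m
  set c : ℝ := |cmk m k / 2| * hdim m k
  have hc0 : 0 ≤ c := by positivity
  have hω0 : 0 ≤ omegaS m := ENNReal.toReal_nonneg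
  have hω : μ Set.univ = ENNReal.ofReal (omegaS m) :=
    (ENNReal.ofReal_toReal (measure_ne_top _ _)).symm
  refine ⟨c * A * omegaS m + 1, by positivity, fun p hp h hcont _ r hr hr1 => ?_⟩
  have hp0 : 0 < p := by linarith
  let K : Evec m × Evec m → Evec m × Evec m → ENNReal := fun a b =>
    ENNReal.ofReal c * ENNReal.ofReal ((1 - r ^ 2) / ‖r • a.1 - b.1‖ ^ m)
  have hK : Measurable (Function.uncurry K) := by
    simp only [K, Function.uncurry_def]
    fun_prop
  let S : Set (Evec m × Evec m) := sphere (0 : Evec m) 1 ×ˢ Set.univ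
  have hS : MeasurableSet S := isClosed_sphere.measurableSet.prod MeasurableSet.univ
  let G : Evec m × Evec m → ENNReal := S.piecewise (fun q => ‖h q.1 q.2‖ₑ) 0
  have hG : Measurable G :=
    ContinuousOn.measurable_piecewise hcont.enorm continuousOn_const hS
  have hGeq : ∀ ζ ω : Evec m, ‖ζ‖ = 1 → G (ζ, ω) = ‖h ζ ω‖ₑ := fun ζ ω hζ =>
    Set.piecewise_eq_of_mem _ _ _ ⟨by simpa using hζ, Set.mem_univ _⟩
  have hae := ae_norm_eq_one_sphereM m
  have hae1 : ∀ᵐ q ∂(μ.prod μ), ‖q.1‖ = 1 := Measure.quasiMeasurePreserving_fst.ae hae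
  have hmass : ∀ a : Evec m × Evec m, ‖a.1‖ = 1 →
      ∫⁻ b, K a b ∂(μ.prod μ) ≤ ENNReal.ofReal (c * A * omegaS m) := by
    intro a ha
    have hm1 : Measurable fun ζ : Evec m =>
        ENNReal.ofReal ((1 - r ^ 2) / ‖r • a.1 - ζ‖ ^ m) := by fun_prop
    rw [lintegral_prod_comp_fst (f := fun ζ => ENNReal.ofReal c *
      ENNReal.ofReal ((1 - r ^ 2) / ‖r • a.1 - ζ‖ ^ m)) (hm1.const_mul _),
      lintegral_const_mul _ hm1, hω, ENNReal.ofReal_mul (mul_nonneg hc0 hA0),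
      ENNReal.ofReal_mul (p := c) hc0]
    gcongr
    exact hA a.1 ha r hr hr1
  have hmass' : ∀ b : Evec m × Evec m, ‖b.1‖ = 1 →
      ∫⁻ a, K a b ∂(μ.prod μ) ≤ ENNReal.ofReal (c * A * omegaS m) := by
    intro b hb
    refine (lintegral_congr_ae ?_).trans_le (hmass b hb)
    filter_upwards [hae1] with a ha
    simp only [K]
    rw [norm_smul_sub_comm ha hb]
  have hpt : ∀ η ν : Evec m, ‖η‖ = 1 → ‖ν‖ = 1 →
      ENNReal.ofReal (|PBint m k Z h (r • η) ν| ^ p) ≤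
        (∫⁻ b, K (η, ν) b * G b ∂(μ.prod μ)) ^ p := by
    intro η ν hη hν
    rw [← ENNReal.ofReal_rpow_of_nonneg (abs_nonneg _) hp0.le, ← Real.enorm_eq_ofReal_abs]
    gcongr
    rw [lintegral_prod (fun b => K (η, ν) b * G b)
      ((hK.of_uncurry_left (x := (η, ν))).mul hG).aemeasurable]
    refine (enorm_integral_le_lintegral_enorm _).trans (lintegral_mono_ae ?_)
    filter_upwards [hae] with ζ hζ
    refine (enorm_integral_le_lintegral_enorm _).trans (lintegral_mono_ae ?_)
    filter_upwards [hae] with ω hω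
    rw [enorm_mul, hGeq ζ ω hζ]
    gcongr
    exact enorm_PB_le hZ hr hr1 hη hω hν
  have hKG : Measurable fun a => (∫⁻ b, K a b * G b ∂(μ.prod μ)) ^ p := by
    have : Measurable (Function.uncurry fun a b => K a b * G b) :=
      hK.mul (hG.comp measurable_snd)
    exact this.lintegral_prod_right.pow_const p
  have hlhs : ∫⁻ η, ∫⁻ ν, ENNReal.ofReal (|PBint m k Z h (r • η) ν| ^ p) ∂μ ∂μ ≤
      ∫⁻ a, (∫⁻ b, K a b * G b ∂(μ.prod μ)) ^ p ∂(μ.prod μ) := by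
    rw [lintegral_prod _ hKG.aemeasurable]
    refine lintegral_mono_ae ?_
    filter_upwards [hae] with η hη
    refine lintegral_mono_ae ?_
    filter_upwards [hae] with ν hν
    exact hpt η ν hη hν
  have hrhs : ∫⁻ b, G b ^ p ∂(μ.prod μ) =
      ∫⁻ ζ, ∫⁻ ω, ENNReal.ofReal (|h ζ ω| ^ p) ∂μ ∂μ := by
    rw [lintegral_prod _ (hG.pow_const p).aemeasurable]
    refine lintegral_congr_ae ?_
    filter_upwards [hae] with ζ hζ
    refine lintegral_congr fun ω => ?_
    rw [hGeq ζ ω hζ, Real.enorm_eq_ofReal_abs,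
      ENNReal.ofReal_rpow_of_nonneg (abs_nonneg _) hp0.le]
  have hschur := lintegral_lintegral_mul_rpow_le hK hG
    (hae1.mono hmass) (hae1.mono hmass') hp
  rw [hrhs] at hschur
  refine (ENNReal.rpow_le_rpow (hlhs.trans hschur) (by positivity)).trans ?_
  rw [ENNReal.mul_rpow_of_nonneg _ _ (by positivity), ← ENNReal.rpow_mul,
    mul_one_div_cancel hp0.ne', ENNReal.rpow_one]
  refine mul_le_mul_left (ENNReal.ofReal_le_ofReal ?_) _
  linarith
end
end

section
/- Let 1 ≤ p < ∞ and f ∈ L^p(𝕊^{m-1}×𝔹^m, ℋ_k). Set g = P_B[f] and, for 0 ≤ r < 1, g_r(η,ν) := g(rη,ν) for η ∈ 𝕊^{m-1}, ν ∈ ℝ^m. Then ‖g_r − f‖_p → 0 as r → 1⁻. -/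
noncomputable section

open MeasureTheory Metric Filter Topology
open scoped RealInnerProductSpace

lemma measurableEmbedding_sphere_coe (m : ℕ) :
    MeasurableEmbedding (Subtype.val : sphere (0 : Evec m) 1 → Evec m) :=
  MeasurableEmbedding.subtype_coe isClosed_sphere.measurableSet

lemma lintegral_sphereM (m : ℕ) (f : Evec m → ENNReal) :
    ∫⁻ ζ, f ζ ∂(sphereM m) = ∫⁻ ζ : sphere (0 : Evec m) 1, f ζ ∂(volume.toSphere) :=
  (measurableEmbedding_sphere_coe m).lintegral_map f

lemma integral_sphereM (m : ℕ) (f : Evec m → ℝ) :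
    ∫ ζ, f ζ ∂(sphereM m) = ∫ ζ : sphere (0 : Evec m) 1, f ζ ∂(volume.toSphere) :=
  (measurableEmbedding_sphere_coe m).integral_map f

lemma ae_norm_eq_one (m : ℕ) : ∀ᵐ ζ ∂(sphereM m), ‖ζ‖ = 1 := by
  unfold sphereM
  rw [(measurableEmbedding_sphere_coe m).ae_map_iff]
  exact Eventually.of_forall fun ζ => by simp

lemma lintegral_polar {m : ℕ} (hm : 0 < m) {f : Evec m → ENNReal} (hf : Measurable f) :
    ∫⁻ x, f x =
      ∫⁻ ζ, (∫⁻ t in Set.Ioi (0 : ℝ), ENNReal.ofReal (t ^ (m - 1)) * f (t • ζ)) ∂(sphereM m) := by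
  have : Nonempty (Fin m) := ⟨⟨0, hm⟩⟩
  have hmp := (volume : Measure (Evec m)).measurePreserving_homeomorphUnitSphereProd
  have hG : Measurable (fun y : sphere (0 : Evec m) 1 × Set.Ioi (0 : ℝ) =>
      f (y.2.1 • y.1.1)) := by fun_prop
  calc ∫⁻ x, f x = ∫⁻ x in ({0}ᶜ : Set (Evec m)), f x := by rw [restrict_compl_singleton]
    _ = ∫⁻ x : ({0}ᶜ : Set (Evec m)), f x ∂(volume.comap Subtype.val) :=
        (lintegral_subtype_comap (measurableSet_singleton _).compl _).symm
    _ = ∫⁻ x : ({0}ᶜ : Set (Evec m)),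
          (fun y : sphere (0 : Evec m) 1 × Set.Ioi (0 : ℝ) => f (y.2.1 • y.1.1))
            (homeomorphUnitSphereProd (Evec m) x) ∂(volume.comap Subtype.val) := by
        refine lintegral_congr fun x => ?_
        have hx : ‖x.1‖ ≠ 0 := norm_ne_zero_iff.2 x.2
        simp [smul_smul, hx]
    _ = _ := hmp.lintegral_comp hG
    _ = _ := by
        rw [lintegral_prod _ hG.aemeasurable, lintegral_sphereM]
        refine lintegral_congr fun ζ => ?_
        rw [Measure.volumeIoiPow, lintegral_withDensity_eq_lintegral_mul _ (by fun_prop)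
          (by fun_prop), finrank_euclideanSpace, Fintype.card_fin]
        exact lintegral_subtype_comap measurableSet_Ioi
          (fun t : ℝ => ENNReal.ofReal (t ^ (m - 1)) * f (t • ζ.1))

lemma lintegral_radial_power {m : ℕ} (hm : 0 < m) {d : ℝ} (hd : 0 < d) :
    ∫⁻ t in Set.Ioi (0 : ℝ), ENNReal.ofReal (t ^ (m - 1)) *
      (if t * d < 1 then 1 else 0) = ENNReal.ofReal (1 / (m * d ^ m)) := by
  have h1 : ∀ t : ℝ, ENNReal.ofReal (t ^ (m - 1)) * (if t * d < 1 then (1 : ENNReal) else 0) =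
      (Set.Iio (1 / d)).indicator (fun t => ENNReal.ofReal (t ^ (m - 1))) t := by
    intro t
    by_cases ht : t * d < 1
    · rw [if_pos ht, mul_one, Set.indicator_of_mem (by rwa [Set.mem_Iio, lt_div_iff₀ hd])]
    · rw [if_neg ht, mul_zero, Set.indicator_of_notMem (by rwa [Set.mem_Iio, lt_div_iff₀ hd])]
  simp_rw [h1]
  rw [setLIntegral_indicator measurableSet_Iio, Set.inter_comm, Set.Ioi_inter_Iio,
    Measure.restrict_congr_set Ioo_ae_eq_Ioc,
    ← ofReal_integral_eq_lintegral_ofReal (intervalIntegral.intervalIntegrable_pow _).1,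
    ← intervalIntegral.integral_of_le (by positivity), integral_pow]
  · congr 1
    have : m - 1 + 1 = m := by omega
    rw [this, ← Nat.cast_add_one, this]
    simp [hm.ne', div_eq_mul_inv]
  · filter_upwards [ae_restrict_mem measurableSet_Ioc] with y hy
    exact pow_nonneg hy.1.le _

/-- The volume of a star-shaped region `{d < 1}`, weighted by a function homogeneous of
degree zero, as an integral over the sphere. -/
lemma lintegral_star {m : ℕ} (hm : 0 < m) {H : Evec m → ENNReal} (hH : Measurable H)
    (hH0 : ∀ t : ℝ, 0 < t → ∀ z, H (t • z) = H z) {d : Evec m → ℝ} (hd : Measurable d)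
    (hd1 : ∀ t : ℝ, 0 < t → ∀ z, d (t • z) = t * d z) (hdp : ∀ z, ‖z‖ = 1 → 0 < d z) :
    ∫⁻ z, H z * (if d z < 1 then 1 else 0) =
      ∫⁻ ζ, H ζ * ENNReal.ofReal (1 / (m * d ζ ^ m)) ∂(sphereM m) := by
  have hmeas : Measurable (fun z => if d z < 1 then (1 : ENNReal) else 0) :=
    Measurable.ite (measurableSet_lt hd measurable_const) measurable_const measurable_const
  rw [lintegral_polar hm (f := fun z => H z * (if d z < 1 then 1 else 0)) (hH.mul hmeas)]
  refine lintegral_congr_ae ?_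
  filter_upwards [ae_norm_eq_one m] with ζ hζ
  rw [← lintegral_radial_power hm (hdp ζ hζ), ← lintegral_const_mul]
  · refine setLIntegral_congr_fun measurableSet_Ioi fun t ht => ?_
    rw [hH0 t ht, hd1 t ht]
    ring
  · exact Measurable.mul (by fun_prop)
      (Measurable.ite (measurableSet_lt (by fun_prop) measurable_const)
        measurable_const measurable_const)

/-- The surface measure is invariant under orthogonal transformations. -/
lemma lintegral_sphereM_comp_isometry {m : ℕ} (hm : 0 < m) (A : Evec m ≃ₗᵢ[ℝ] Evec m)
    {f : Evec m → ENNReal} (hf : Measurable f) :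
    ∫⁻ ω, f (A ω) ∂(sphereM m) = ∫⁻ ω, f ω ∂(sphereM m) := by
  have hm' : (m : ℝ) ≠ 0 := by exact_mod_cast hm.ne'
  have key : ∀ g : Evec m → ENNReal, Measurable g →
      ∫⁻ z, g (‖z‖⁻¹ • z) * (if ‖z‖ < 1 then 1 else 0) =
        ENNReal.ofReal (1 / m) * ∫⁻ ζ, g ζ ∂(sphereM m) := by
    intro g hg
    rw [lintegral_star hm (H := fun z => g (‖z‖⁻¹ • z)) (by fun_prop) _ measurable_norm _ _,
      ← lintegral_const_mul _ hg]
    · refine lintegral_congr_ae ?_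
      filter_upwards [ae_norm_eq_one m] with ζ hζ
      simp [hζ, mul_comm]
    · intro t ht z
      rw [norm_smul, Real.norm_of_nonneg ht.le, mul_inv, smul_smul, mul_right_comm,
        inv_mul_cancel₀ ht.ne', one_mul]
    · intro t ht z
      rw [norm_smul, Real.norm_of_nonneg ht.le]
    · intro z hz
      simp [hz]
  have h1 := key (fun z => f (A z)) (hf.comp A.continuous.measurable)
  have h2 := key f hf
  have h3 : ∫⁻ z, f (A (‖z‖⁻¹ • z)) * (if ‖z‖ < 1 then 1 else 0) =
      ∫⁻ z, f (‖z‖⁻¹ • z) * (if ‖z‖ < 1 then 1 else 0) := by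
    rw [← A.measurePreserving.lintegral_comp_emb A.toHomeomorph.measurableEmbedding
      (fun z => f (‖z‖⁻¹ • z) * (if ‖z‖ < 1 then 1 else 0))]
    simp
  rw [h3, h2] at h1
  exact ((ENNReal.mul_right_inj (by simp; omega) ENNReal.ofReal_ne_top).1 h1).symm

lemma omegaS_pos {m : ℕ} (hm : 0 < m) : 0 < omegaS m := by
  have : Nonempty (Fin m) := ⟨⟨0, hm⟩⟩
  unfold omegaS
  refine ENNReal.toReal_pos ?_ (measure_ne_top _ _)
  have := (volume : Measure (Evec m)).toSphere_ne_zero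
  rwa [sphereM, Measure.map_apply measurable_subtype_coe .univ, Set.preimage_univ, Ne,
    Measure.measure_univ_eq_zero]

/-! ### Projecting the sphere from an interior point -/

/-- The positively homogeneous map sending a point `ζ` of the unit sphere to `ζ - x`. -/
def coneMap {m : ℕ} (x z : Evec m) : Evec m := z - ‖z‖ • x

lemma coneMap_smul {m : ℕ} (x z : Evec m) {t : ℝ} (ht : 0 < t) :
    coneMap x (t • z) = t • coneMap x z := by
  simp [coneMap, norm_smul, abs_of_pos ht, smul_sub, smul_smul]

lemma coneMap_of_norm_eq_one {m : ℕ} (x : Evec m) {z : Evec m} (hz : ‖z‖ = 1) :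
    coneMap x z = z - x := by simp [coneMap, hz]

lemma coneMap_injective {m : ℕ} {x : Evec m} (hx : ‖x‖ < 1) :
    Function.Injective (coneMap x) := by
  intro z w h
  have h1 : z - w = (‖z‖ - ‖w‖) • x := by
    unfold coneMap at h
    rw [sub_smul]
    exact sub_eq_sub_iff_sub_eq_sub.1 h
  have h2 : ‖z - w‖ ≤ ‖z - w‖ * ‖x‖ := by
    conv_lhs => rw [h1, norm_smul]
    gcongr
    exact abs_norm_sub_norm_le z w
  by_contra hne
  have h3 : 0 < ‖z - w‖ := norm_pos_iff.2 (sub_ne_zero.2 hne)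
  nlinarith

lemma coneMap_surjective {m : ℕ} {x : Evec m} (hx : ‖x‖ < 1) :
    Function.Surjective (coneMap x) := by
  intro y
  have hc : ContractingWith ‖x‖₊ (fun z : Evec m => y + ‖z‖ • x) := by
    refine ⟨by exact_mod_cast hx, LipschitzWith.of_dist_le_mul fun z w => ?_⟩
    rw [dist_add_left, dist_eq_norm, ← sub_smul, norm_smul, mul_comm, dist_eq_norm, coe_nnnorm]
    gcongr
    exact abs_norm_sub_norm_le z w
  refine ⟨ContractingWith.fixedPoint _ hc, ?_⟩
  have h := hc.fixedPoint_isFixedPt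
  rw [Function.IsFixedPt] at h
  rw [coneMap, sub_eq_iff_eq_add]
  exact h.symm

lemma coneMap_image_compl_zero {m : ℕ} {x : Evec m} (hx : ‖x‖ < 1) :
    coneMap x '' {0}ᶜ = {0}ᶜ := by
  rw [Set.image_compl_eq ⟨coneMap_injective hx, coneMap_surjective hx⟩]
  simp [coneMap]

lemma hasFDerivAt_coneMap {m : ℕ} (x : Evec m) {z : Evec m} (hz : z ≠ 0) :
    HasFDerivAt (coneMap x)
      (ContinuousLinearMap.id ℝ (Evec m) - (‖z‖⁻¹ • innerSL ℝ z).smulRight x) z := by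
  have h1 : HasFDerivAt (fun z : Evec m => ‖z‖) (‖z‖⁻¹ • innerSL ℝ z) z := by
    have h := (hasStrictFDerivAt_norm_sq z).hasFDerivAt.sqrt (by simpa using hz)
    have hn : ‖z‖ ≠ 0 := norm_ne_zero_iff.2 hz
    convert! h using 1
    · ext w; simp
    · ext w
      simp
      field_simp
  exact (hasFDerivAt_id z).sub (h1.smul_const x)

lemma det_coneMap_fderiv {m : ℕ} (x z : Evec m) :
    (ContinuousLinearMap.id ℝ (Evec m) - (‖z‖⁻¹ • innerSL ℝ z).smulRight x).det =
      1 - ‖z‖⁻¹ * ⟪x, z⟫ := by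
  have : ((ContinuousLinearMap.id ℝ (Evec m) - (‖z‖⁻¹ • innerSL ℝ z).smulRight x :
      Evec m →L[ℝ] Evec m) : Evec m →ₗ[ℝ] Evec m) =
      LinearMap.transvection ((-(‖z‖⁻¹ • innerSL ℝ z) : Evec m →L[ℝ] ℝ) : Evec m →ₗ[ℝ] ℝ) x := by
    ext w
    simp [LinearMap.transvection, sub_eq_add_neg]
  rw [ContinuousLinearMap.det, this, LinearMap.transvection.det]
  simp [real_inner_comm, sub_eq_add_neg]

/-- Change of variables from the sphere to the sphere of directions seen from `x`. -/
lemma lintegral_directions {m : ℕ} (hm : 0 < m) {x : Evec m} (hx : ‖x‖ < 1)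
    {G : Evec m → ENNReal} (hG : Measurable G)
    (hG0 : ∀ t : ℝ, 0 < t → ∀ z, G (t • z) = G z) :
    ∫⁻ ζ, G (ζ - x) * ENNReal.ofReal ((1 - ⟪x, ζ⟫) / ‖ζ - x‖ ^ m) ∂(sphereM m) =
      ∫⁻ a, G a ∂(sphereM m) := by
  have hmR : (0 : ℝ) < m := by exact_mod_cast hm
  have hcont : Continuous (coneMap x) := by unfold coneMap; fun_prop
  have hne : ∀ z : Evec m, ‖z‖ = 1 → 0 < ‖z - x‖ := by
    intro z hz
    rw [norm_pos_iff, sub_ne_zero]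
    rintro rfl
    linarith
  have hdet : ∀ z : Evec m, ‖z‖⁻¹ * ⟪x, z⟫ ≤ 1 := by
    intro z
    rcases eq_or_ne z 0 with rfl | hz
    · simp
    have hz' : 0 < ‖z‖ := norm_pos_iff.2 hz
    rw [inv_mul_le_iff₀ hz', mul_one]
    calc ⟪x, z⟫ ≤ ‖x‖ * ‖z‖ := real_inner_le_norm x z
      _ ≤ 1 * ‖z‖ := by gcongr
      _ = ‖z‖ := one_mul _
  have h1 := lintegral_star hm hG hG0 measurable_norm
    (fun t ht z => by rw [norm_smul, Real.norm_of_nonneg ht.le]) (fun z hz => by simp [hz])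
  have h2 := lintegral_star hm
    (H := fun z => G (coneMap x z) * ENNReal.ofReal (1 - ‖z‖⁻¹ * ⟪x, z⟫))
    (d := fun z => ‖coneMap x z‖) (by fun_prop)
    (fun t ht z => by
      rw [coneMap_smul x z ht, hG0 t ht, norm_smul, Real.norm_of_nonneg ht.le, inner_smul_right]
      congr 3
      field_simp) (by fun_prop)
    (fun t ht z => by rw [coneMap_smul x z ht, norm_smul, Real.norm_of_nonneg ht.le])
    (fun z hz => by rw [coneMap_of_norm_eq_one x hz]; exact hne z hz)
  have h3 : ∫⁻ z, G z * (if ‖z‖ < 1 then 1 else 0) =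
      ∫⁻ z, G (coneMap x z) * ENNReal.ofReal (1 - ‖z‖⁻¹ * ⟪x, z⟫) *
        (if ‖coneMap x z‖ < 1 then 1 else 0) := by
    have : Nonempty (Fin m) := ⟨⟨0, hm⟩⟩
    have h := lintegral_image_eq_lintegral_abs_det_fderiv_mul (volume : Measure (Evec m))
      (measurableSet_singleton (0 : Evec m)).compl
      (fun z hz => (hasFDerivAt_coneMap x hz).hasFDerivWithinAt)
      (coneMap_injective hx).injOn (fun z => G z * (if ‖z‖ < 1 then 1 else 0))
    rw [coneMap_image_compl_zero hx, restrict_compl_singleton] at h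
    rw [h]
    refine lintegral_congr fun z => ?_
    rw [det_coneMap_fderiv, abs_of_nonneg (by linarith [hdet z])]
    ring
  rw [h1, h2] at h3
  have h4 : ∫⁻ ζ, G ζ * ENNReal.ofReal (1 / (m * ‖ζ‖ ^ m)) ∂(sphereM m) =
      ENNReal.ofReal (1 / m) * ∫⁻ a, G a ∂(sphereM m) := by
    rw [← lintegral_const_mul _ hG]
    refine lintegral_congr_ae ?_
    filter_upwards [ae_norm_eq_one m] with ζ hζ
    simp [hζ, mul_comm]
  have h5 : ∫⁻ ζ, G (coneMap x ζ) * ENNReal.ofReal (1 - ‖ζ‖⁻¹ * ⟪x, ζ⟫) *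
        ENNReal.ofReal (1 / (m * ‖coneMap x ζ‖ ^ m)) ∂(sphereM m) =
      ENNReal.ofReal (1 / m) *
        ∫⁻ ζ, G (ζ - x) * ENNReal.ofReal ((1 - ⟪x, ζ⟫) / ‖ζ - x‖ ^ m) ∂(sphereM m) := by
    rw [← lintegral_const_mul _ (by fun_prop)]
    refine lintegral_congr_ae ?_
    filter_upwards [ae_norm_eq_one m] with ζ hζ
    have hd := hdet ζ
    rw [hζ, inv_one, one_mul] at hd
    rw [coneMap_of_norm_eq_one x hζ, hζ, inv_one, one_mul, mul_assoc,
      ← ENNReal.ofReal_mul (by linarith), mul_left_comm, ← ENNReal.ofReal_mul (by positivity)]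
    congr 2
    have := hne ζ hζ
    field_simp
  rw [h4, h5] at h3
  exact ((ENNReal.mul_right_inj (by simp; omega) ENNReal.ofReal_ne_top).1 h3).symm

/-- The scalar Poisson kernel `(1-|x|²)/|x-ζ|^m` of the unit ball. -/
def poissonK (m : ℕ) (x ζ : Evec m) : ℝ := (1 - ‖x‖ ^ 2) / ‖x - ζ‖ ^ m

lemma poissonK_nonneg {m : ℕ} {x : Evec m} (hx : ‖x‖ < 1) (ζ : Evec m) : 0 ≤ poissonK m x ζ := by
  have : ‖x‖ ^ 2 ≤ 1 := by nlinarith [norm_nonneg x]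
  exact div_nonneg (by linarith) (by positivity)

lemma measurable_poissonK (m : ℕ) : Measurable (fun q : Evec m × Evec m => poissonK m q.1 q.2) := by
  unfold poissonK
  fun_prop

lemma measurable_poissonK_right {m : ℕ} (x : Evec m) : Measurable (poissonK m x) := by
  unfold poissonK
  fun_prop

/-- The density of harmonic measure at `x` with respect to the angle seen from `x`. -/
def angleWeight {m : ℕ} (x a : Evec m) : ℝ :=
  1 + ⟪x, a⟫ / √((1 - ‖x‖ ^ 2) * ‖a‖ ^ 2 + ⟪x, a⟫ ^ 2)

lemma angleWeight_smul {m : ℕ} (x a : Evec m) {t : ℝ} (ht : 0 < t) :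
    angleWeight x (t • a) = angleWeight x a := by
  unfold angleWeight
  rw [norm_smul, Real.norm_of_nonneg ht.le, inner_smul_right,
    show (1 - ‖x‖ ^ 2) * (t * ‖a‖) ^ 2 + (t * ⟪x, a⟫) ^ 2 =
      t ^ 2 * ((1 - ‖x‖ ^ 2) * ‖a‖ ^ 2 + ⟪x, a⟫ ^ 2) by ring,
    Real.sqrt_mul (by positivity), Real.sqrt_sq ht.le, mul_div_mul_left _ _ ht.ne']

lemma angleWeight_add_neg {m : ℕ} (x a : Evec m) :
    angleWeight x a + angleWeight x (-a) = 2 := by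
  unfold angleWeight
  rw [norm_neg, inner_neg_right, neg_sq, neg_div]
  ring

lemma angleWeight_nonneg {m : ℕ} {x : Evec m} (hx : ‖x‖ < 1) (a : Evec m) :
    0 ≤ angleWeight x a := by
  have hx2 : ‖x‖ ^ 2 ≤ 1 := by nlinarith [norm_nonneg x]
  have h1 : |⟪x, a⟫| ≤ √((1 - ‖x‖ ^ 2) * ‖a‖ ^ 2 + ⟪x, a⟫ ^ 2) := by
    apply Real.abs_le_sqrt
    nlinarith [sq_nonneg ‖a‖]
  have h2 : |⟪x, a⟫ / √((1 - ‖x‖ ^ 2) * ‖a‖ ^ 2 + ⟪x, a⟫ ^ 2)| ≤ 1 := by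
    rw [abs_div, abs_of_nonneg (Real.sqrt_nonneg _)]
    exact div_le_one_of_le₀ h1 (Real.sqrt_nonneg _)
  unfold angleWeight
  linarith [(abs_le.1 h2).1]

lemma poissonK_eq_angleWeight {m : ℕ} {x ζ : Evec m} (hx : ‖x‖ < 1) (hζ : ‖ζ‖ = 1) :
    poissonK m x ζ = angleWeight x (ζ - x) * ((1 - ⟪x, ζ⟫) / ‖ζ - x‖ ^ m) := by
  have hc : ⟪x, ζ⟫ < 1 := by
    calc ⟪x, ζ⟫ ≤ ‖x‖ * ‖ζ‖ := real_inner_le_norm x ζ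
      _ < 1 := by rwa [hζ, mul_one]
  have hd : ‖ζ - x‖ ^ 2 = 1 - 2 * ⟪x, ζ⟫ + ‖x‖ ^ 2 := by
    rw [norm_sub_sq_real, hζ, real_inner_comm]; ring
  have hi : ⟪x, ζ - x⟫ = ⟪x, ζ⟫ - ‖x‖ ^ 2 := by
    rw [inner_sub_right, real_inner_self_eq_norm_sq]
  have hs : √((1 - ‖x‖ ^ 2) * ‖ζ - x‖ ^ 2 + ⟪x, ζ - x⟫ ^ 2) = 1 - ⟪x, ζ⟫ := by
    rw [hd, hi, show (1 - ‖x‖ ^ 2) * (1 - 2 * ⟪x, ζ⟫ + ‖x‖ ^ 2) + (⟪x, ζ⟫ - ‖x‖ ^ 2) ^ 2 =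
      (1 - ⟪x, ζ⟫) ^ 2 by ring, Real.sqrt_sq (by linarith)]
  have hne : 1 - ⟪x, ζ⟫ ≠ 0 := by linarith
  have hxd : 0 < ‖ζ - x‖ := by
    rw [norm_pos_iff, sub_ne_zero]
    rintro rfl
    linarith
  unfold poissonK angleWeight
  rw [hs, hi, norm_sub_rev]
  field_simp
  ring

/-- For an even function of the direction, averaging over directions against harmonic measure
at any interior point is averaging against the uniform measure. -/
lemma lintegral_poissonK_even {m : ℕ} (hm : 0 < m) {x : Evec m} (hx : ‖x‖ < 1)
    {G : Evec m → ENNReal} (hG : Measurable G)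
    (hG0 : ∀ t : ℝ, t ≠ 0 → ∀ z, G (t • z) = G z) :
    ∫⁻ ζ, ENNReal.ofReal (poissonK m x ζ) * G (x - ζ) ∂(sphereM m) = ∫⁻ a, G a ∂(sphereM m) := by
  have hneg : ∀ z, G (-z) = G z := fun z => by
    rw [← hG0 (-1) (by norm_num) z, neg_one_smul]
  have hW : Measurable (angleWeight x) := by unfold angleWeight; fun_prop
  have h1 : ∫⁻ ζ, ENNReal.ofReal (poissonK m x ζ) * G (x - ζ) ∂(sphereM m) =
      ∫⁻ a, G a * ENNReal.ofReal (angleWeight x a) ∂(sphereM m) := by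
    rw [← lintegral_directions hm hx (G := fun a => G a * ENNReal.ofReal (angleWeight x a))
      (by fun_prop) (fun t ht z => by rw [hG0 t ht.ne', angleWeight_smul x z ht])]
    refine lintegral_congr_ae ?_
    filter_upwards [ae_norm_eq_one m] with ζ hζ
    rw [poissonK_eq_angleWeight hx hζ, ENNReal.ofReal_mul (angleWeight_nonneg hx _),
      ← neg_sub ζ x, hneg]
    ring
  have h2 : ∫⁻ a, G a * ENNReal.ofReal (angleWeight x (-a)) ∂(sphereM m) =
      ∫⁻ a, G a * ENNReal.ofReal (angleWeight x a) ∂(sphereM m) := by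
    rw [← lintegral_sphereM_comp_isometry hm (LinearIsometryEquiv.neg ℝ)
      (f := fun a => G a * ENNReal.ofReal (angleWeight x a)) (by fun_prop)]
    simp [hneg]
  have h3 : 2 * ∫⁻ a, G a * ENNReal.ofReal (angleWeight x a) ∂(sphereM m) =
      2 * ∫⁻ a, G a ∂(sphereM m) := by
    rw [two_mul]
    nth_rewrite 2 [← h2]
    rw [← lintegral_add_left (by fun_prop), ← lintegral_const_mul _ hG]
    refine lintegral_congr fun a => ?_
    rw [← mul_add, ← ENNReal.ofReal_add (angleWeight_nonneg hx _) (angleWeight_nonneg hx _),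
      angleWeight_add_neg]
    simp [mul_comm]
  rw [h1]
  exact (ENNReal.mul_right_inj (by simp) (by simp)).1 h3

/-! ### Integrals of polynomials over the sphere -/

open MvPolynomial in
/-- The function on `ℝ^m` defined by a polynomial. -/
def polyFun {m : ℕ} (P : MvPolynomial (Fin m) ℝ) (x : Evec m) : ℝ := eval (fun i => x i) P

/-- Differentiation of polynomials in the direction `v`. -/
def dirD {m : ℕ} (v : Evec m) :
    Derivation ℝ (MvPolynomial (Fin m) ℝ) (MvPolynomial (Fin m) ℝ) :=
  MvPolynomial.mkDerivation ℝ fun i => MvPolynomial.C (v i)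

/-- The linear form `⟨v, ·⟩` as a polynomial. -/
def linP {m : ℕ} (v : Evec m) : MvPolynomial (Fin m) ℝ :=
  ∑ i, MvPolynomial.C (v i) * MvPolynomial.X i

/-- The Laplacian of a polynomial. -/
def polyLap {m : ℕ} (P : MvPolynomial (Fin m) ℝ) : MvPolynomial (Fin m) ℝ :=
  ∑ i, MvPolynomial.pderiv i (MvPolynomial.pderiv i P)

lemma dirD_X {m : ℕ} (v : Evec m) (i : Fin m) :
    dirD v (MvPolynomial.X i) = MvPolynomial.C (v i) := by
  simp [dirD]

lemma dirD_apply {m : ℕ} (v : Evec m) (P : MvPolynomial (Fin m) ℝ) :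
    dirD v P = ∑ i, MvPolynomial.C (v i) * MvPolynomial.pderiv i P := by
  induction P using MvPolynomial.induction_on with
  | C a => simp
  | add P Q hP hQ => simp [hP, hQ, mul_add, Finset.sum_add_distrib]
  | mul_X P j hP =>
    simp only [Derivation.leibniz, hP, dirD_X, MvPolynomial.pderiv_X, smul_eq_mul, mul_add,
      Finset.sum_add_distrib, Finset.mul_sum]
    refine congrArg₂ (· + ·) ?_ ?_
    · rw [Finset.sum_eq_single j]
      · simp [mul_comm]
      · intro b _ hb
        simp [hb.symm]
      · simp
    · exact Finset.sum_congr rfl fun i _ => by ring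

lemma dirD_single {m : ℕ} (i : Fin m) :
    dirD (EuclideanSpace.single i 1) = MvPolynomial.pderiv i := by
  refine MvPolynomial.derivation_ext fun j => ?_
  rw [dirD_X, MvPolynomial.pderiv_X]
  by_cases h : j = i
  · subst h; simp
  · simp [h]

lemma dirD_linP {m : ℕ} (v : Evec m) : dirD v (linP v) = MvPolynomial.C (‖v‖ ^ 2) := by
  rw [EuclideanSpace.real_norm_sq_eq]
  simp [linP, dirD_X, pow_two]

lemma polyFun_linP {m : ℕ} (v x : Evec m) : polyFun (linP v) x = ⟪v, x⟫ := by
  simp [polyFun, linP, PiLp.inner_apply, mul_comm]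

lemma pderiv_dirD_comm {m : ℕ} (v : Evec m) (i : Fin m) (P : MvPolynomial (Fin m) ℝ) :
    MvPolynomial.pderiv i (dirD v P) = dirD v (MvPolynomial.pderiv i P) := by
  have h : ⁅(MvPolynomial.pderiv i : Derivation ℝ (MvPolynomial (Fin m) ℝ) (MvPolynomial (Fin m) ℝ)),
      dirD v⁆ = (0 : Derivation ℝ (MvPolynomial (Fin m) ℝ) (MvPolynomial (Fin m) ℝ)) := by
    refine MvPolynomial.derivation_ext fun j => ?_
    rw [Derivation.commutator_apply, dirD_X, MvPolynomial.pderiv_X]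
    by_cases h : j = i
    · subst h; simp
    · simp [h]
  have h2 := congrArg (fun D => D P) h
  simp only [Derivation.commutator_apply, Derivation.coe_zero, Pi.zero_apply] at h2
  exact sub_eq_zero.1 h2

lemma polyLap_dirD {m : ℕ} (v : Evec m) {P : MvPolynomial (Fin m) ℝ} (hP : polyLap P = 0) :
    polyLap (dirD v P) = 0 := by
  unfold polyLap at *
  simp_rw [pderiv_dirD_comm]
  rw [← map_sum, hP, map_zero]

lemma isHomogeneous_dirD {m d : ℕ} (v : Evec m) {P : MvPolynomial (Fin m) ℝ}
    (hP : P.IsHomogeneous d) : (dirD v P).IsHomogeneous (d - 1) := by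
  rw [dirD_apply]
  exact MvPolynomial.IsHomogeneous.sum _ _ _ fun i _ => (hP.pderiv).C_mul (v i)

lemma isHomogeneous_linP {m : ℕ} (v : Evec m) : (linP v).IsHomogeneous 1 :=
  MvPolynomial.IsHomogeneous.sum _ _ _ fun i _ => (MvPolynomial.isHomogeneous_X ℝ i).C_mul (v i)

lemma polyFun_smul {m d : ℕ} {P : MvPolynomial (Fin m) ℝ} (hP : P.IsHomogeneous d) (t : ℝ)
    (x : Evec m) : polyFun P (t • x) = t ^ d * polyFun P x := by
  unfold polyFun
  rw [MvPolynomial.eval_eq', MvPolynomial.eval_eq', Finset.mul_sum]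
  refine Finset.sum_congr rfl fun e he => ?_
  have := hP (MvPolynomial.mem_support_iff.1 he)
  rw [Finsupp.weight_apply, Finsupp.sum_fintype _ _ (by simp)] at this
  simp only [Pi.one_apply, smul_eq_mul, mul_one] at this
  simp only [PiLp.smul_apply, smul_eq_mul, mul_pow, Finset.prod_mul_distrib]
  rw [Finset.prod_pow_eq_pow_sum, this]
  ring

lemma hasFDerivAt_polyFun {m : ℕ} (P : MvPolynomial (Fin m) ℝ) (x : Evec m) :
    HasFDerivAt (polyFun P)
      (∑ i, polyFun (MvPolynomial.pderiv i P) x •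
        (EuclideanSpace.proj i : Evec m →L[ℝ] ℝ)) x := by
  induction P using MvPolynomial.induction_on with
  | C a =>
    have : polyFun (MvPolynomial.C a : MvPolynomial (Fin m) ℝ) = fun _ => a := by
      ext x; simp [polyFun]
    rw [this]
    simpa [polyFun] using hasFDerivAt_const a x
  | add P Q hP hQ =>
    have : polyFun (P + Q) = fun x => polyFun P x + polyFun Q x := by
      ext x; simp [polyFun]
    rw [this]
    convert! hP.add hQ using 1
    simp [polyFun, add_smul, Finset.sum_add_distrib]
  | mul_X P j hP =>
    have : polyFun (P * MvPolynomial.X j) =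
        fun x => polyFun P x * (EuclideanSpace.proj j : Evec m →L[ℝ] ℝ) x := by
      ext x; simp [polyFun]
    rw [this]
    convert! hP.mul (EuclideanSpace.proj j : Evec m →L[ℝ] ℝ).hasFDerivAt using 1
    ext w
    simp only [polyFun, Derivation.leibniz, MvPolynomial.pderiv_X, smul_eq_mul, map_add, map_mul,
      MvPolynomial.eval_X, sum_apply, smul_apply,
      add_apply, PiLp.proj_apply, add_mul, Finset.sum_add_distrib,
      Finset.mul_sum]
    congr 1
    · rw [Finset.sum_eq_single j]
      · simp
      · intro b _ hb
        simp [hb.symm]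
      · simp
    · refine Finset.sum_congr rfl fun i _ => by ring

lemma fderiv_polyFun {m : ℕ} (P : MvPolynomial (Fin m) ℝ) (x v : Evec m) :
    fderiv ℝ (polyFun P) x v = polyFun (dirD v P) x := by
  rw [(hasFDerivAt_polyFun P x).fderiv, dirD_apply]
  simp [polyFun, mul_comm]

lemma continuous_polyFun {m : ℕ} (P : MvPolynomial (Fin m) ℝ) : Continuous (polyFun P) :=
  continuous_iff_continuousAt.2 fun x => (hasFDerivAt_polyFun P x).continuousAt

lemma lapl_polyFun {m : ℕ} (P : MvPolynomial (Fin m) ℝ) (x : Evec m) :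
    lapl (polyFun P) x = polyFun (polyLap P) x := by
  have h : ∀ (i : Fin m) (Q : MvPolynomial (Fin m) ℝ),
      pdv i (polyFun Q) = polyFun (MvPolynomial.pderiv i Q) := by
    intro i Q
    ext y
    rw [pdv, fderiv_polyFun, dirD_single]
  simp only [lapl, h]
  simp [polyLap, polyFun]

lemma exists_polyFun_bound {m d : ℕ} {P : MvPolynomial (Fin m) ℝ} (hP : P.IsHomogeneous d) :
    ∃ C : ℝ, ∀ x, |polyFun P x| ≤ C * ‖x‖ ^ d := by
  obtain ⟨C, hC⟩ := (isCompact_sphere (0 : Evec m) 1).exists_bound_of_continuousOn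
    (continuous_polyFun P).continuousOn
  obtain ⟨C₀, hC₀⟩ : ∃ C₀ : ℝ, |polyFun P 0| ≤ C₀ := ⟨_, le_rfl⟩
  refine ⟨max C C₀, fun x => ?_⟩
  rcases eq_or_ne x 0 with rfl | hx
  · rcases Nat.eq_zero_or_pos d with rfl | hd
    · simpa using Or.inr hC₀
    · have := polyFun_smul hP 0 (0 : Evec m)
      rw [zero_smul, zero_pow hd.ne', zero_mul] at this
      simp [this, hd.ne']
  · have hn : ‖x‖ ≠ 0 := norm_ne_zero_iff.2 hx
    have h1 : x = ‖x‖ • (‖x‖⁻¹ • x) := by simp [smul_smul, hn]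
    have h2 := hC (‖x‖⁻¹ • x) (by simp [norm_smul, hn])
    calc |polyFun P x| = ‖x‖ ^ d * |polyFun P (‖x‖⁻¹ • x)| := by
          conv_lhs => rw [h1, polyFun_smul hP, abs_mul, abs_of_nonneg (by positivity)]
      _ ≤ ‖x‖ ^ d * max C C₀ := by gcongr; exact h2.trans (le_max_left _ _)
      _ = _ := mul_comm _ _

/-- Radial Gaussian moments. -/
def gaussMoment (n : ℕ) : ℝ := ∫ t in Set.Ioi (0 : ℝ), t ^ n * Real.exp (-t ^ 2)

lemma gaussMoment_eq (n : ℕ) : gaussMoment n = 1 / 2 * Real.Gamma ((n + 1) / 2) := by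
  rw [gaussMoment, ← integral_rpow_mul_exp_neg_rpow (p := 2) (q := n) (by norm_num)
    (by linarith [(Nat.cast_nonneg n : (0 : ℝ) ≤ n)])]
  refine setIntegral_congr_fun measurableSet_Ioi fun t _ => ?_
  simp

lemma gaussMoment_pos (n : ℕ) : 0 < gaussMoment n := by
  rw [gaussMoment_eq]
  have : 0 < Real.Gamma (((n : ℝ) + 1) / 2) := Real.Gamma_pos_of_pos (by positivity)
  positivity

lemma gaussMoment_add_two (n : ℕ) : 2 * gaussMoment (n + 2) = (n + 1) * gaussMoment n := by
  rw [gaussMoment_eq, gaussMoment_eq]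
  push_cast
  rw [show ((n : ℝ) + 2 + 1) / 2 = (n + 1) / 2 + 1 by ring, Real.Gamma_add_one (by positivity)]
  ring

lemma integrable_norm_pow_gauss {m : ℕ} (hm : 0 < m) (d : ℕ) :
    Integrable (fun x : Evec m => ‖x‖ ^ d * Real.exp (-‖x‖ ^ 2)) := by
  have : Nonempty (Fin m) := ⟨⟨0, hm⟩⟩
  rw [integrable_fun_norm_addHaar volume (f := fun t => t ^ d * Real.exp (-t ^ 2))]
  have h := integrableOn_rpow_mul_exp_neg_mul_sq (b := 1) one_pos
    (s := ((Module.finrank ℝ (Evec m) - 1 + d : ℕ) : ℝ))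
    (by linarith [(Nat.cast_nonneg _ : (0 : ℝ) ≤ ((Module.finrank ℝ (Evec m) - 1 + d : ℕ) : ℝ))])
  refine h.congr_fun (fun t _ => ?_) measurableSet_Ioi
  simp only [Real.rpow_natCast, pow_add, smul_eq_mul]
  ring_nf

lemma integrable_polyFun_gauss {m d : ℕ} (hm : 0 < m) {P : MvPolynomial (Fin m) ℝ}
    (hP : P.IsHomogeneous d) :
    Integrable (fun x : Evec m => polyFun P x * Real.exp (-‖x‖ ^ 2)) := by
  obtain ⟨C, hC⟩ := exists_polyFun_bound hP
  refine ((integrable_norm_pow_gauss hm d).const_mul C).mono'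
    ((continuous_polyFun P).mul (by fun_prop)).aestronglyMeasurable (Eventually.of_forall fun x => ?_)
  rw [norm_mul, Real.norm_of_nonneg (Real.exp_pos _).le, ← mul_assoc]
  gcongr
  exact hC x

/-- The integral of a polynomial over the unit sphere. -/
def sphInt {m : ℕ} (P : MvPolynomial (Fin m) ℝ) : ℝ := ∫ ζ, polyFun P ζ ∂(sphereM m)

lemma integral_polyFun_gauss {m d : ℕ} (hm : 0 < m) {P : MvPolynomial (Fin m) ℝ}
    (hP : P.IsHomogeneous d) :
    ∫ x : Evec m, polyFun P x * Real.exp (-‖x‖ ^ 2) = sphInt P * gaussMoment (m - 1 + d) := by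
  have : Nonempty (Fin m) := ⟨⟨0, hm⟩⟩
  have hmp := (volume : Measure (Evec m)).measurePreserving_homeomorphUnitSphereProd
  calc ∫ x : Evec m, polyFun P x * Real.exp (-‖x‖ ^ 2)
      = ∫ x : ({0}ᶜ : Set (Evec m)), polyFun P x.1 * Real.exp (-‖x.1‖ ^ 2)
          ∂(volume.comap Subtype.val) := by
        rw [integral_subtype_comap (measurableSet_singleton _).compl
          (fun x : Evec m => polyFun P x * Real.exp (-‖x‖ ^ 2)), restrict_compl_singleton]
    _ = ∫ x : ({0}ᶜ : Set (Evec m)),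
          (fun y : sphere (0 : Evec m) 1 × Set.Ioi (0 : ℝ) =>
            polyFun P y.1.1 * (y.2.1 ^ d * Real.exp (-y.2.1 ^ 2)))
            (homeomorphUnitSphereProd (Evec m) x) ∂(volume.comap Subtype.val) := by
        refine integral_congr_ae (Eventually.of_forall fun x => ?_)
        have hx : ‖x.1‖ ≠ 0 := norm_ne_zero_iff.2 x.2
        simp [polyFun_smul hP]
        field_simp
    _ = ∫ y : sphere (0 : Evec m) 1 × Set.Ioi (0 : ℝ),
          polyFun P y.1.1 * (y.2.1 ^ d * Real.exp (-y.2.1 ^ 2))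
          ∂(volume.toSphere.prod (Measure.volumeIoiPow (Module.finrank ℝ (Evec m) - 1))) :=
        hmp.integral_comp (Homeomorph.measurableEmbedding _)
          (fun y : sphere (0 : Evec m) 1 × Set.Ioi (0 : ℝ) =>
            polyFun P y.1.1 * (y.2.1 ^ d * Real.exp (-y.2.1 ^ 2)))
    _ = _ := by
        rw [integral_prod_mul (fun ζ : sphere (0 : Evec m) 1 => polyFun P ζ.1)
          (fun t : Set.Ioi (0 : ℝ) => t.1 ^ d * Real.exp (-t.1 ^ 2)), sphInt, integral_sphereM]
        congr 1
        simp only [Measure.volumeIoiPow, ENNReal.ofReal]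
        rw [integral_withDensity_eq_integral_smul (by fun_prop), finrank_euclideanSpace,
          Fintype.card_fin, gaussMoment,
          integral_subtype_comap measurableSet_Ioi
            (fun t : ℝ => Real.toNNReal (t ^ (m - 1)) • (t ^ d * Real.exp (-t ^ 2)))]
        refine setIntegral_congr_fun measurableSet_Ioi fun t ht => ?_
        simp only [NNReal.smul_def]
        rw [Real.coe_toNNReal _ (pow_nonneg (le_of_lt ht) _), smul_eq_mul, pow_add, mul_assoc]

lemma sphInt_add {m : ℕ} (P Q : MvPolynomial (Fin m) ℝ) :
    sphInt (P + Q) = sphInt P + sphInt Q := by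
  have hint : ∀ R : MvPolynomial (Fin m) ℝ, Integrable (polyFun R) (sphereM m) := by
    intro R
    obtain ⟨C, hC⟩ := (isCompact_sphere (0 : Evec m) 1).exists_bound_of_continuousOn
      (continuous_polyFun R).continuousOn
    refine Integrable.of_bound (continuous_polyFun R).aestronglyMeasurable C ?_
    filter_upwards [ae_norm_eq_one m] with ζ hζ
    exact hC ζ (by simpa using hζ)
  rw [sphInt, sphInt, sphInt, ← integral_add (hint P) (hint Q)]
  simp [polyFun]

lemma sphInt_C_mul {m : ℕ} (c : ℝ) (P : MvPolynomial (Fin m) ℝ) :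
    sphInt (MvPolynomial.C c * P) = c * sphInt P := by
  rw [sphInt, sphInt, ← integral_const_mul]
  simp [polyFun]

lemma sphInt_zero {m : ℕ} : sphInt (0 : MvPolynomial (Fin m) ℝ) = 0 := by
  simp [sphInt, polyFun]

lemma sphInt_sum {m : ℕ} {ι : Type*} (s : Finset ι) (f : ι → MvPolynomial (Fin m) ℝ) :
    sphInt (∑ i ∈ s, f i) = ∑ i ∈ s, sphInt (f i) := by
  classical
  induction s using Finset.induction_on with
  | empty => simp [sphInt_zero]
  | insert a s ha ih => rw [Finset.sum_insert ha, Finset.sum_insert ha, sphInt_add, ih]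

lemma dirD_eq_zero {m : ℕ} (v : Evec m) {P : MvPolynomial (Fin m) ℝ} (hP : P.IsHomogeneous 0) :
    dirD v P = 0 := by
  rw [MvPolynomial.totalDegree_eq_zero_iff_eq_C.1 (Nat.le_zero.1 hP.totalDegree_le)]
  simp

/-- Integration by parts on the sphere. -/
lemma sphInt_linP_mul {m d : ℕ} (hm : 0 < m) (v : Evec m) {P : MvPolynomial (Fin m) ℝ}
    (hP : P.IsHomogeneous d) :
    ((m : ℝ) + d - 1) * sphInt (linP v * P) = sphInt (dirD v P) := by
  have hlP : (linP v * P).IsHomogeneous (1 + d) := (isHomogeneous_linP v).mul hP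
  have hgd : ∀ x : Evec m, HasFDerivAt (fun x : Evec m => Real.exp (-‖x‖ ^ 2))
      (Real.exp (-‖x‖ ^ 2) • -((2 : ℕ) • (innerSL ℝ x : Evec m →L[ℝ] ℝ))) x := by
    intro x
    exact (hasStrictFDerivAt_norm_sq x).hasFDerivAt.neg.exp
  have hg : ∀ x : Evec m, polyFun P x * fderiv ℝ (fun x : Evec m => Real.exp (-‖x‖ ^ 2)) x v =
      -2 * (polyFun (linP v * P) x * Real.exp (-‖x‖ ^ 2)) := by
    intro x
    rw [(hgd x).fderiv]
    have : polyFun (linP v * P) x = ⟪v, x⟫ * polyFun P x := by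
      rw [← polyFun_linP]; simp [polyFun]
    rw [this, real_inner_comm]
    simp
    ring
  have hparts := integral_mul_fderiv_eq_neg_fderiv_mul_of_integrable
    (μ := (volume : Measure (Evec m))) (f := polyFun P)
    (g := fun x => Real.exp (-‖x‖ ^ 2)) (v := v)
    (by simp_rw [fderiv_polyFun]; exact integrable_polyFun_gauss hm (isHomogeneous_dirD v hP))
    (by simp_rw [hg]; exact (integrable_polyFun_gauss hm hlP).const_mul _)
    (integrable_polyFun_gauss hm hP)
    (fun x _ => (hasFDerivAt_polyFun P x).differentiableAt)
    (fun x _ => (hgd x).differentiableAt)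
  simp_rw [hg, fderiv_polyFun] at hparts
  rw [integral_const_mul, integral_polyFun_gauss hm hlP,
    integral_polyFun_gauss hm (isHomogeneous_dirD v hP)] at hparts
  rcases Nat.eq_zero_or_pos d with rfl | hd
  · rw [dirD_eq_zero v hP, sphInt_zero] at hparts ⊢
    have : sphInt (linP v * P) * gaussMoment (m - 1 + (1 + 0)) = 0 := by linarith
    rw [(mul_eq_zero.1 this).resolve_right (gaussMoment_pos _).ne', mul_zero]
  · have e1 : m - 1 + (1 + d) = (m - 1 + (d - 1)) + 2 := by omega
    have e2 : ((m - 1 + (d - 1) : ℕ) : ℝ) + 1 = (m : ℝ) + d - 1 := by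
      push_cast [Nat.cast_sub hm, Nat.cast_sub hd]; ring
    have h2 := gaussMoment_add_two (m - 1 + (d - 1))
    rw [e2] at h2
    rw [e1] at hparts
    have hJ := (gaussMoment_pos (m - 1 + (d - 1))).ne'
    apply mul_right_cancel₀ hJ
    linear_combination (-1) * hparts - sphInt (linP v * P) * h2

/-! ### The spherical mean of a harmonic polynomial along reflections -/

lemma isHomogeneous_iterate_dirD {m d : ℕ} (v : Evec m) {P : MvPolynomial (Fin m) ℝ}
    (hP : P.IsHomogeneous d) (i : ℕ) : ((dirD v)^[i] P).IsHomogeneous (d - i) := by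
  induction i with
  | zero => exact hP
  | succ i ih =>
    rw [Function.iterate_succ_apply', Nat.sub_add_eq]
    exact isHomogeneous_dirD v ih

lemma polyLap_iterate_dirD {m : ℕ} (v : Evec m) {P : MvPolynomial (Fin m) ℝ}
    (hP : polyLap P = 0) (i : ℕ) : polyLap ((dirD v)^[i] P) = 0 := by
  induction i with
  | zero => exact hP
  | succ i ih =>
    rw [Function.iterate_succ_apply']
    exact polyLap_dirD v ih

lemma iterate_dirD_eq_zero {m d : ℕ} (v : Evec m) {P : MvPolynomial (Fin m) ℝ}
    (hP : P.IsHomogeneous d) {i : ℕ} (hi : d < i) : (dirD v)^[i] P = 0 := by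
  obtain ⟨j, rfl⟩ := Nat.exists_eq_add_of_lt hi
  rw [Function.iterate_succ_apply']
  refine dirD_eq_zero v ?_
  have := isHomogeneous_iterate_dirD v hP (d + j)
  rwa [Nat.sub_eq_zero_of_le (Nat.le_add_right d j)] at this

lemma dirD_linP_pow_mul {m : ℕ} {v : Evec m} (hv : ‖v‖ = 1) (i : ℕ)
    (Y : MvPolynomial (Fin m) ℝ) :
    dirD v (linP v ^ i * Y) =
      linP v ^ i * dirD v Y + MvPolynomial.C (i : ℝ) * (linP v ^ (i - 1) * Y) := by
  rw [Derivation.leibniz, Derivation.leibniz_pow, dirD_linP, hv]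
  simp only [smul_eq_mul, nsmul_eq_mul, one_pow, map_one, map_natCast]
  ring

/-- A harmonic homogeneous polynomial is orthogonal on the sphere to all lower powers of a linear
form. -/
lemma sphInt_linP_pow_mul_eq_zero {m : ℕ} (hm : 2 ≤ m) {v : Evec m} (hv : ‖v‖ = 1) (i : ℕ) :
    ∀ (j : ℕ) (Y : MvPolynomial (Fin m) ℝ), Y.IsHomogeneous j → polyLap Y = 0 → i < j →
      sphInt (linP v ^ i * Y) = 0 := by
  have hm' : (2 : ℝ) ≤ m := by exact_mod_cast hm
  induction i using Nat.strong_induction_on with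
  | _ i ih =>
  intro j Y hY hL hij
  have hj1 : (1 : ℝ) ≤ j := by exact_mod_cast (show 1 ≤ j by omega)
  rcases Nat.eq_zero_or_pos i with rfl | hi
  · rw [pow_zero, one_mul]
    have hE : MvPolynomial.C (j : ℝ) * Y =
        ∑ l, linP (EuclideanSpace.single l 1) * MvPolynomial.pderiv l Y := by
      have h := hY.sum_X_mul_pderiv
      rw [nsmul_eq_mul] at h
      rw [map_natCast, ← h]
      refine Finset.sum_congr rfl fun l _ => ?_
      congr 1
      rw [linP, Finset.sum_eq_single l]
      · simp
      · intro b _ hb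
        simp [hb]
      · simp
    have h2 : ((m : ℝ) + j - 2) * sphInt (MvPolynomial.C (j : ℝ) * Y) = 0 := by
      rw [hE, sphInt_sum, Finset.mul_sum]
      have : ∀ l, ((m : ℝ) + j - 2) *
          sphInt (linP (EuclideanSpace.single l 1) * MvPolynomial.pderiv l Y) =
          sphInt (MvPolynomial.pderiv l (MvPolynomial.pderiv l Y)) := by
        intro l
        have h3 := sphInt_linP_mul (by omega) (EuclideanSpace.single l 1)
          (hY.pderiv (i := l))
        rw [dirD_single, Nat.cast_sub (by omega)] at h3
        rw [← h3]
        push_cast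
        ring
      rw [Finset.sum_congr rfl fun l _ => this l, ← sphInt_sum]
      change sphInt (polyLap Y) = 0
      rw [hL, sphInt_zero]
    rw [sphInt_C_mul, ← mul_assoc] at h2
    refine (mul_eq_zero.1 h2).resolve_left (mul_ne_zero ?_ ?_)
    · have : 0 < (m : ℝ) + j - 2 := by linarith
      exact this.ne'
    · positivity
  · obtain ⟨i, rfl⟩ := Nat.exists_eq_succ_of_ne_zero hi.ne'
    have hh : (linP v ^ i * Y).IsHomogeneous (1 * i + j) := ((isHomogeneous_linP v).pow i).mul hY
    have h := sphInt_linP_mul (by omega) v hh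
    rw [dirD_linP_pow_mul hv, sphInt_add, sphInt_C_mul,
      ih i (by omega) (j - 1) _ (isHomogeneous_dirD v hY) (polyLap_dirD v hL) (by omega),
      ih (i - 1) (by omega) j Y hY hL (by omega), ← mul_assoc, ← pow_succ'] at h
    simp only [mul_zero, add_zero] at h
    refine (mul_eq_zero.1 h).resolve_left ?_
    have : 0 < (m : ℝ) + ((1 * i + j : ℕ) : ℝ) - 1 := by
      push_cast
      have : (0 : ℝ) ≤ i := by positivity
      linarith
    exact this.ne'

lemma sphInt_linP_pow_iterate_dirD {m k : ℕ} (hm : 2 ≤ m) {v : Evec m} (hv : ‖v‖ = 1)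
    {P : MvPolynomial (Fin m) ℝ} (hP : P.IsHomogeneous k) (hL : polyLap P = 0) {j : ℕ}
    (hj : j < k) :
    ((m : ℝ) + 2 * j) * sphInt (linP v ^ (j + 1) * (dirD v)^[k - (j + 1)] P) =
      sphInt (linP v ^ j * (dirD v)^[k - j] P) := by
  set Y := (dirD v)^[k - (j + 1)] P with hYdef
  have hY : Y.IsHomogeneous (j + 1) := by
    have := isHomogeneous_iterate_dirD v hP (k - (j + 1))
    rwa [show k - (k - (j + 1)) = j + 1 by omega] at this
  have hYL : polyLap Y = 0 := polyLap_iterate_dirD v hL _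
  have hD : (dirD v)^[k - j] P = dirD v Y := by
    rw [hYdef, ← Function.iterate_succ_apply' (f := dirD v)]
    congr 1
    rw [show k - j = (k - (j + 1)).succ by omega]
  have h := sphInt_linP_mul (by omega) v (((isHomogeneous_linP v).pow j).mul hY)
  rw [dirD_linP_pow_mul hv, sphInt_add, sphInt_C_mul,
    sphInt_linP_pow_mul_eq_zero hm hv (j - 1) _ Y hY hYL (by omega), ← mul_assoc, ← pow_succ',
    mul_zero, add_zero] at h
  rw [hD, ← h]
  push_cast
  ring

/-- Taylor expansion of a homogeneous polynomial. -/
lemma polyFun_add_smul {m k : ℕ} {P : MvPolynomial (Fin m) ℝ} (hP : P.IsHomogeneous k)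
    (a v : Evec m) (t s : ℝ) :
    polyFun P (t • a + s • v) = ∑ i ∈ Finset.range (k + 1),
      s ^ i / i.factorial * t ^ (k - i) * polyFun ((dirD v)^[i] P) a := by
  set φ : MvPolynomial (Fin m) ℝ →ₐ[ℝ] Polynomial ℝ :=
    MvPolynomial.aeval fun i => Polynomial.C ((t • a) i) + Polynomial.C (v i) * Polynomial.X
    with hφ
  have heval : ∀ (Q : MvPolynomial (Fin m) ℝ) (u : ℝ),
      (φ Q).eval u = polyFun Q (t • a + u • v) := by
    intro Q u
    rw [hφ, polyFun]
    induction Q using MvPolynomial.induction_on with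
    | C c => simp
    | add P Q hP hQ => simp only [map_add, Polynomial.eval_add, hP, hQ]
    | mul_X P j hP =>
      simp only [map_mul, Polynomial.eval_mul, hP, MvPolynomial.aeval_X, MvPolynomial.eval_X]
      congr 1
      simp only [Polynomial.eval_add, Polynomial.eval_mul, Polynomial.eval_C, Polynomial.eval_X,
        PiLp.add_apply, PiLp.smul_apply, smul_eq_mul]
      ring
  have hder : ∀ Q : MvPolynomial (Fin m) ℝ, Polynomial.derivative (φ Q) = φ (dirD v Q) := by
    intro Q
    induction Q using MvPolynomial.induction_on with
    | C c => simp [hφ]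
    | add P Q hP hQ => simp only [map_add, hP, hQ]
    | mul_X P j hP =>
      rw [map_mul, Polynomial.derivative_mul, hP, Derivation.leibniz, dirD_X]
      have hX : Polynomial.derivative (φ (MvPolynomial.X j)) = φ (MvPolynomial.C (v j)) := by
        rw [hφ, MvPolynomial.aeval_X, MvPolynomial.aeval_C]
        simp
      rw [hX, map_add, smul_eq_mul, smul_eq_mul, map_mul, map_mul]
      ring
  have hiter : ∀ i : ℕ, Polynomial.derivative^[i] (φ P) = φ ((dirD v)^[i] P) := by
    intro i
    induction i with
    | zero => rfl
    | succ i ih => rw [Function.iterate_succ_apply', Function.iterate_succ_apply', ih, hder]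
  have hcoeff : ∀ i : ℕ, (φ P).coeff i = polyFun ((dirD v)^[i] P) (t • a) / i.factorial := by
    intro i
    have h1 := Polynomial.coeff_iterate_derivative (p := φ P) (k := i) 0
    rw [hiter, Polynomial.coeff_zero_eq_eval_zero, heval] at h1
    simp only [zero_smul, add_zero, zero_add, Nat.descFactorial_self, nsmul_eq_mul] at h1
    rw [h1]
    field_simp
  have hdeg : (φ P).natDegree < k + 1 := by
    rw [Nat.lt_succ_iff, Polynomial.natDegree_le_iff_coeff_eq_zero]
    intro N hN
    rw [hcoeff, iterate_dirD_eq_zero v hP hN]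
    simp [polyFun]
  rw [← heval, Polynomial.eval_eq_sum_range' hdeg]
  refine Finset.sum_congr rfl fun i _ => ?_
  rw [hcoeff, polyFun_smul (isHomogeneous_iterate_dirD v hP i)]
  ring

lemma integral_polyFun_reflv {m k : ℕ} (hm : 3 ≤ m) {v : Evec m} (hv : ‖v‖ = 1)
    {P : MvPolynomial (Fin m) ℝ} (hP : P.IsHomogeneous k) (hL : polyLap P = 0) :
    ((m : ℝ) + 2 * k - 2) * ∫ a, polyFun P (reflv a v) ∂(sphereM m) =
      ((m : ℝ) - 2) * (omegaS m * polyFun P v) := by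
  set T : ℕ → ℝ := fun j =>
    (-2) ^ j / (k - j).factorial * sphInt (linP v ^ j * (dirD v)^[k - j] P) with hT
  have hsum : ∫ a, polyFun P (reflv a v) ∂(sphereM m) = ∑ j ∈ Finset.range (k + 1), T j := by
    have h1 : ∫ a, polyFun P (reflv a v) ∂(sphereM m) =
        sphInt (∑ j ∈ Finset.range (k + 1), MvPolynomial.C ((-2 : ℝ) ^ j / (k - j).factorial) *
          (linP v ^ j * (dirD v)^[k - j] P)) := by
      refine integral_congr_ae ?_
      filter_upwards [ae_norm_eq_one m] with a ha
      have h2 : reflv a v = (-2 * ⟪v, a⟫) • a + (1 : ℝ) • v := by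
        rw [reflv, ha, real_inner_comm]
        module
      rw [h2, polyFun_add_smul hP, ← Finset.sum_flip]
      simp only [polyFun, map_sum, map_mul, map_pow, MvPolynomial.eval_C]
      refine Finset.sum_congr rfl fun j hj => ?_
      rw [Finset.mem_range] at hj
      have h3 := polyFun_linP v a
      rw [polyFun] at h3
      rw [h3, show k - (k - j) = j by omega]
      ring
    rw [h1, sphInt_sum]
    simp only [sphInt_C_mul, hT]
  have hrec : ∀ j < k, ((m : ℝ) + 2 * j) * T (j + 1) = -2 * (k - j) * T j := by
    intro j hj
    have h := sphInt_linP_pow_iterate_dirD (by omega) hv hP hL hj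
    simp only [hT]
    rw [← h, show k - j = (k - (j + 1)) + 1 by omega, Nat.factorial_succ]
    have hc : (k : ℝ) - j = ((k - (j + 1) : ℕ) : ℝ) + 1 := by
      rw [Nat.cast_sub (by omega)]; push_cast; ring
    rw [hc]
    push_cast
    have : ((k - (j + 1) : ℕ) : ℝ) + 1 ≠ 0 := by positivity
    field_simp
    ring
  have hpart : ∀ n ≤ k, ((m : ℝ) + 2 * k - 2) * ∑ j ∈ Finset.range (n + 1), T j =
      ((m : ℝ) - 2) * T 0 + 2 * (k - n) * T n := by
    intro n hn
    induction n with
    | zero => simp; ring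
    | succ n ih =>
      rw [Finset.sum_range_succ, mul_add, ih (by omega)]
      push_cast
      linear_combination hrec n (by omega)
  have hT0 : T 0 = omegaS m * polyFun P v := by
    have hc : ∀ a, polyFun ((dirD v)^[k] P) a = k.factorial * polyFun P v := by
      intro a
      have h := polyFun_add_smul hP a v 0 1
      rw [Finset.sum_eq_single k] at h
      · simp only [zero_smul, one_smul, zero_add, one_pow, Nat.sub_self, pow_zero, mul_one] at h
        rw [h]
        field_simp
      · intro i hi hik
        rw [Finset.mem_range] at hi
        rw [zero_pow (by omega)]
        simp
      · simp
    simp only [hT, sphInt, pow_zero, one_mul, Nat.sub_zero, hc, integral_const, smul_eq_mul,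
      omegaS, Measure.real]
    field_simp
  rw [hsum, hpart k le_rfl, hT0]
  ring

/-- Elements of `ℋ_k` are given by homogeneous harmonic polynomials. -/
lemma IsHk.exists_polyFun {m k : ℕ} {q : Evec m → ℝ} (hq : IsHk m k q) :
    ∃ P : MvPolynomial (Fin m) ℝ, P.IsHomogeneous k ∧ polyLap P = 0 ∧ q = polyFun P := by
  obtain ⟨⟨P, hP⟩, hhom, hlap⟩ := hq
  have hqP : q = polyFun (MvPolynomial.homogeneousComponent k P) := by
    ext x
    set f : Polynomial ℝ := ∑ i ∈ Finset.range (P.totalDegree + 1),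
      Polynomial.C (polyFun (MvPolynomial.homogeneousComponent i P) x) * Polynomial.X ^ i with hf
    have hfe : f = Polynomial.C (q x) * Polynomial.X ^ k := by
      refine Polynomial.funext fun c => ?_
      have h1 : q (c • x) = polyFun P (c • x) := hP _
      rw [hhom, ← MvPolynomial.sum_homogeneousComponent P] at h1
      simp only [polyFun, map_sum] at h1
      rw [hf]
      simp only [Polynomial.eval_finsetSum, Polynomial.eval_mul, Polynomial.eval_C,
        Polynomial.eval_pow, Polynomial.eval_X]
      rw [mul_comm (q x), h1]
      refine Finset.sum_congr rfl fun i _ => ?_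
      have := polyFun_smul (MvPolynomial.homogeneousComponent_isHomogeneous i P) c x
      rw [mul_comm, ← this]
      rfl
    have hck := congrArg (fun g => Polynomial.coeff g k) hfe
    simp only [hf, Polynomial.finsetSum_coeff, Polynomial.coeff_C_mul, Polynomial.coeff_X_pow,
      mul_ite, mul_one, mul_zero, Finset.sum_ite_eq, if_true] at hck
    rw [← hck]
    split_ifs with hk
    · rfl
    · rw [Finset.mem_range, not_lt] at hk
      rw [MvPolynomial.homogeneousComponent_eq_zero _ _ (by omega)]
      simp [polyFun]
  refine ⟨_, MvPolynomial.homogeneousComponent_isHomogeneous k P, ?_, hqP⟩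
  refine MvPolynomial.funext fun x => ?_
  have h := hlap (WithLp.toLp 2 x)
  rw [hqP, lapl_polyFun] at h
  rw [map_zero]
  exact h

/-! ### Approximate identity estimates for the scalar Poisson kernel -/

lemma lintegral_poissonK {m : ℕ} (hm : 0 < m) {x : Evec m} (hx : ‖x‖ < 1) :
    ∫⁻ ζ, ENNReal.ofReal (poissonK m x ζ) ∂(sphereM m) = sphereM m Set.univ := by
  simpa using lintegral_poissonK_even hm hx (G := fun _ => 1) measurable_const (by simp)

lemma poissonK_smul_comm {m : ℕ} (r : ℝ) {η ζ : Evec m} (hη : ‖η‖ = 1) (hζ : ‖ζ‖ = 1) :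
    poissonK m (r • η) ζ = poissonK m (r • ζ) η := by
  have h : ‖r • η - ζ‖ = ‖r • ζ - η‖ := by
    rw [← sq_eq_sq₀ (norm_nonneg _) (norm_nonneg _), norm_sub_sq_real, norm_sub_sq_real,
      norm_smul, norm_smul, hη, hζ, real_inner_smul_left, real_inner_smul_left, real_inner_comm]
  rw [poissonK, poissonK, h, norm_smul, norm_smul, hη, hζ]

lemma poissonK_le_of_le_dist {m : ℕ} {r δ : ℝ} (hr0 : 0 ≤ r) (hr1 : r < 1) (hδ : 0 < δ)
    (hrδ : 1 - r < δ / 2) {η ζ : Evec m} (hη : ‖η‖ = 1) (hd : δ ≤ ‖ζ - η‖) :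
    poissonK m (r • η) ζ ≤ (1 - r ^ 2) / (δ / 2) ^ m := by
  have h1 : ‖η - r • η‖ = 1 - r := by
    rw [show η - r • η = (1 - r) • η by module, norm_smul, hη, Real.norm_of_nonneg (by linarith),
      mul_one]
  have h2 : ‖ζ - η‖ ≤ ‖r • η - ζ‖ + ‖η - r • η‖ := by
    rw [norm_sub_rev ζ η, add_comm]
    calc ‖η - ζ‖ = ‖(η - r • η) + (r • η - ζ)‖ := by congr 1; abel
      _ ≤ _ := norm_add_le _ _
  have h3 : δ / 2 ≤ ‖r • η - ζ‖ := by linarith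
  have h4 : 0 ≤ 1 - r ^ 2 := by nlinarith
  rw [poissonK, norm_smul, hη, Real.norm_of_nonneg hr0, mul_one]
  gcongr

lemma enorm_sub_rpow_le_three {p : ℝ} (hp : 1 ≤ p) (a b c d : ℝ) :
    ‖a - d‖ₑ ^ p ≤ (2 ^ (p - 1)) ^ 2 * (‖a - b‖ₑ ^ p + ‖b - c‖ₑ ^ p + ‖d - c‖ₑ ^ p) := by
  have h0 : (1 : ENNReal) ≤ 2 ^ (p - 1) := by
    simpa using ENNReal.rpow_le_rpow (one_le_two (α := ENNReal)) (sub_nonneg.2 hp)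
  have h1 : ‖a - d‖ₑ ≤ ‖a - b‖ₑ + (‖b - c‖ₑ + ‖d - c‖ₑ) := by
    rw [show a - d = (a - b) + ((b - c) - (d - c)) by ring]
    exact (enorm_add_le _ _).trans (by gcongr; exact enorm_sub_le)
  calc ‖a - d‖ₑ ^ p ≤ (‖a - b‖ₑ + (‖b - c‖ₑ + ‖d - c‖ₑ)) ^ p := by gcongr
    _ ≤ 2 ^ (p - 1) * (‖a - b‖ₑ ^ p + (‖b - c‖ₑ + ‖d - c‖ₑ) ^ p) :=
        ENNReal.rpow_add_le_mul_rpow_add_rpow _ _ hp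
    _ ≤ 2 ^ (p - 1) * (2 ^ (p - 1) * ‖a - b‖ₑ ^ p +
          2 ^ (p - 1) * (‖b - c‖ₑ ^ p + ‖d - c‖ₑ ^ p)) := by
        gcongr
        · exact le_mul_of_one_le_left' h0
        · exact ENNReal.rpow_add_le_mul_rpow_add_rpow _ _ hp
    _ = _ := by ring

lemma lintegral_enorm_sub_rpow_le {m : ℕ} {p : ℝ} (hp : 1 ≤ p) {h : Evec m → Evec m → ℝ}
    (hh : Measurable fun q : Evec m × Evec m => h q.1 q.2) {g : Evec m × Evec m → ℝ}
    (hg : Measurable g) (ζ η : Evec m) :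
    ∫⁻ ω, ‖h ζ ω - h η ω‖ₑ ^ p ∂(sphereM m) ≤
      (2 ^ (p - 1)) ^ 2 * (∫⁻ ω, ‖h ζ ω - g (ζ, ω)‖ₑ ^ p ∂(sphereM m) +
        ∫⁻ ω, ‖g (ζ, ω) - g (η, ω)‖ₑ ^ p ∂(sphereM m) +
        ∫⁻ ω, ‖h η ω - g (η, ω)‖ₑ ^ p ∂(sphereM m)) := by
  have hm0 : ∀ ζ, Measurable fun ω => g (ζ, ω) := fun ζ => hg.comp measurable_prodMk_left
  have hm1 : ∀ ζ, Measurable fun ω => ‖h ζ ω - g (ζ, ω)‖ₑ ^ p := fun ζ =>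
    (((hh.comp measurable_prodMk_left).sub (hm0 ζ)).enorm).pow_const p
  have hm2 : Measurable fun ω => ‖g (ζ, ω) - g (η, ω)‖ₑ ^ p :=
    (((hm0 ζ).sub (hm0 η)).enorm).pow_const p
  have hm3 : Measurable fun ω => ‖h ζ ω - g (ζ, ω)‖ₑ ^ p + ‖g (ζ, ω) - g (η, ω)‖ₑ ^ p +
      ‖h η ω - g (η, ω)‖ₑ ^ p := ((hm1 ζ).add hm2).add (hm1 η)
  rw [← lintegral_add_left (hm1 ζ), ← lintegral_add_right _ (hm1 η),
    ← lintegral_const_mul _ hm3]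
  exact lintegral_mono fun ω => enorm_sub_rpow_le_three hp _ _ _ _

lemma mul_le_of_split {w x a b c e D K : ENNReal} (hx : x ≤ D * (a + c + b))
    (hc : w * c ≤ w * e + K) : w * x ≤ D * (w * a + w * (b + e) + K) :=
  calc w * x ≤ w * (D * (a + c + b)) := by gcongr
    _ = D * (w * a + w * b + w * c) := by ring
    _ ≤ D * (w * a + w * b + (w * e + K)) := by gcongr
    _ = _ := by ring

/-- The mean oscillation of `h` between `η` and `ζ`, weighted by the Poisson kernel at `r • η`. -/
def poissonOsc (m : ℕ) (p : ℝ) (h : Evec m → Evec m → ℝ) (r : ℝ) : ENNReal :=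
  ∫⁻ η, (∫⁻ ζ, ENNReal.ofReal (poissonK m (r • η) ζ) *
    (∫⁻ ω, ‖h ζ ω - h η ω‖ₑ ^ p ∂(sphereM m)) ∂(sphereM m)) ∂(sphereM m)

lemma exists_continuous_approx {m : ℕ} {p : ℝ} (hp : 1 ≤ p) {h : Evec m → Evec m → ℝ}
    (hh : Measurable fun q : Evec m × Evec m => h q.1 q.2)
    (hfin : ∫⁻ ζ, (∫⁻ ω, ‖h ζ ω‖ₑ ^ p ∂(sphereM m)) ∂(sphereM m) < ⊤) {ε : ℝ} (hε : 0 < ε) :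
    ∃ g : Evec m × Evec m → ℝ, HasCompactSupport g ∧ Continuous g ∧
      ∫⁻ ζ, (∫⁻ ω, ‖h ζ ω - g (ζ, ω)‖ₑ ^ p ∂(sphereM m)) ∂(sphereM m) ≤ ENNReal.ofReal ε := by
  have hp0 : 0 < p := by linarith
  have hpe : ENNReal.ofReal p ≠ 0 := by simpa using hp0
  have hnorm : ∀ f : Evec m × Evec m → ℝ, Measurable f →
      eLpNorm f (ENNReal.ofReal p) ((sphereM m).prod (sphereM m)) =
        (∫⁻ ζ, (∫⁻ ω, ‖f (ζ, ω)‖ₑ ^ p ∂(sphereM m)) ∂(sphereM m)) ^ (1 / p) := by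
    intro f hf
    rw [eLpNorm_eq_lintegral_rpow_enorm_toReal hpe ENNReal.ofReal_ne_top,
      ENNReal.toReal_ofReal hp0.le, lintegral_prod _ (by fun_prop)]
  have hmem : MemLp (fun q : Evec m × Evec m => h q.1 q.2) (ENNReal.ofReal p)
      ((sphereM m).prod (sphereM m)) := by
    refine ⟨hh.aestronglyMeasurable, ?_⟩
    rw [hnorm _ hh]
    exact ENNReal.rpow_lt_top_of_nonneg (by positivity) hfin.ne
  have hε' : 0 < ε ^ (1 / p) := by positivity
  obtain ⟨g, hgs, hgl, hgc, -⟩ := hmem.exists_hasCompactSupport_eLpNorm_sub_le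
    ENNReal.ofReal_ne_top (ε := ENNReal.ofReal (ε ^ (1 / p))) (by simpa using hε')
  refine ⟨g, hgs, hgc, ?_⟩
  rw [hnorm _ (hh.sub hgc.measurable), ← ENNReal.ofReal_rpow_of_pos hε] at hgl
  exact (ENNReal.rpow_le_rpow_iff (by positivity)).1 hgl

lemma lintegral_kernel_le {m : ℕ} {w Φ : Evec m → Evec m → ENNReal} {ψ : Evec m → ENNReal}
    {D e K W : ENNReal} (hwm : Measurable fun q : Evec m × Evec m => w q.1 q.2)
    (hψm : Measurable ψ) (hW : sphereM m Set.univ = W)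
    (hmass : ∀ᵐ η ∂(sphereM m), ∫⁻ ζ, w η ζ ∂(sphereM m) = W)
    (hmass' : ∀ᵐ ζ ∂(sphereM m), ∫⁻ η, w η ζ ∂(sphereM m) = W)
    (hpt : ∀ᵐ η ∂(sphereM m), ∀ ζ,
      w η ζ * Φ ζ η ≤ D * (w η ζ * ψ ζ + w η ζ * (ψ η + e) + K)) :
    ∫⁻ η, (∫⁻ ζ, w η ζ * Φ ζ η ∂(sphereM m)) ∂(sphereM m) ≤
      D * (2 * W * ∫⁻ ζ, ψ ζ ∂(sphereM m) + W ^ 2 * e + K * W ^ 2) := by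
  have hw1 : ∀ η, Measurable (w η) := fun η => hwm.comp measurable_prodMk_left
  have hinner : ∀ᵐ η ∂(sphereM m), ∫⁻ ζ, w η ζ * Φ ζ η ∂(sphereM m) ≤
      D * (∫⁻ ζ, w η ζ * ψ ζ ∂(sphereM m) + (W * ψ η + (W * e + K * W))) := by
    filter_upwards [hpt, hmass] with η hη hmη
    refine (lintegral_mono hη).trans_eq ?_
    have h1 : Measurable fun ζ => w η ζ * ψ ζ := (hw1 η).mul hψm
    have h2 : Measurable fun ζ => w η ζ * (ψ η + e) := (hw1 η).mul_const _
    have h3 : Measurable fun ζ => w η ζ * ψ ζ + w η ζ * (ψ η + e) + K :=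
      (h1.add h2).add_const K
    rw [lintegral_const_mul _ h3, lintegral_add_right _ measurable_const,
      lintegral_add_left h1, lintegral_mul_const _ (hw1 η), hmη, lintegral_const, hW]
    ring
  have hwψ : Measurable fun q : Evec m × Evec m => w q.1 q.2 * ψ q.2 :=
    hwm.mul (hψm.comp measurable_snd)
  have hA : ∫⁻ η, (∫⁻ ζ, w η ζ * ψ ζ ∂(sphereM m)) ∂(sphereM m) = W * ∫⁻ ζ, ψ ζ ∂(sphereM m) := by
    rw [lintegral_lintegral_swap hwψ.aemeasurable, ← lintegral_const_mul _ hψm]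
    refine lintegral_congr_ae ?_
    filter_upwards [hmass'] with ζ hζ
    have hw2 : Measurable fun η => w η ζ := hwm.comp measurable_prodMk_right
    rw [lintegral_mul_const _ hw2, hζ]
  refine (lintegral_mono_ae hinner).trans_eq ?_
  have h1 : Measurable fun η => ∫⁻ ζ, w η ζ * ψ ζ ∂(sphereM m) := hwψ.lintegral_prod_right'
  have h2 : Measurable fun η => W * ψ η := hψm.const_mul W
  have h3 : Measurable fun η => ∫⁻ ζ, w η ζ * ψ ζ ∂(sphereM m) +
      (W * ψ η + (W * e + K * W)) := h1.add (h2.add_const _)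
  rw [lintegral_const_mul _ h3, lintegral_add_left h1, hA, lintegral_add_left h2,
    lintegral_const_mul _ hψm, lintegral_const, hW]
  ring

lemma exists_lintegral_sub_le {m : ℕ} {p : ℝ} (hp : 0 < p) {g : Evec m × Evec m → ℝ}
    (hgs : HasCompactSupport g) (hgc : Continuous g) {ε : ℝ} (hε : 0 < ε) :
    ∃ δ > 0, ∃ M : ENNReal, M ≠ ⊤ ∧
      (∀ ζ η : Evec m, ‖ζ - η‖ < δ →
        ∫⁻ ω, ‖g (ζ, ω) - g (η, ω)‖ₑ ^ p ∂(sphereM m) ≤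
          ENNReal.ofReal ε * sphereM m Set.univ) ∧
      ∀ ζ η : Evec m, ∫⁻ ω, ‖g (ζ, ω) - g (η, ω)‖ₑ ^ p ∂(sphereM m) ≤ M := by
  obtain ⟨δ, hδ, hδg⟩ := Metric.uniformContinuous_iff.1
    (hgs.uniformContinuous_of_continuous hgc) (ε ^ (1 / p)) (by positivity)
  obtain ⟨B, hB⟩ := hgs.exists_bound_of_continuous hgc
  refine ⟨δ, hδ, ENNReal.ofReal (B + B) ^ p * sphereM m Set.univ, ENNReal.mul_ne_top
    (ENNReal.rpow_ne_top_of_nonneg hp.le ENNReal.ofReal_ne_top) (measure_ne_top _ _),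
    fun ζ η hd => ?_, fun ζ η => ?_⟩
  · rw [← lintegral_const]
    refine lintegral_mono fun ω => ?_
    have h1 : dist (g (ζ, ω)) (g (η, ω)) < ε ^ (1 / p) := hδg (by
      rw [Prod.dist_eq, dist_self, max_eq_left dist_nonneg, dist_eq_norm]; exact hd)
    rw [Real.dist_eq] at h1
    have h2 : ‖g (ζ, ω) - g (η, ω)‖ₑ ≤ ENNReal.ofReal ε ^ (1 / p) := by
      rw [ENNReal.ofReal_rpow_of_pos hε, Real.enorm_eq_ofReal_abs]
      exact ENNReal.ofReal_le_ofReal h1.le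
    calc ‖g (ζ, ω) - g (η, ω)‖ₑ ^ p ≤ (ENNReal.ofReal ε ^ (1 / p)) ^ p := by gcongr
      _ = ENNReal.ofReal ε := by
        rw [← ENNReal.rpow_mul, one_div, inv_mul_cancel₀ hp.ne', ENNReal.rpow_one]
  · rw [← lintegral_const]
    refine lintegral_mono fun ω => ?_
    have : ‖g (ζ, ω) - g (η, ω)‖ₑ ≤ ENNReal.ofReal (B + B) := by
      rw [Real.enorm_eq_ofReal_abs]
      exact ENNReal.ofReal_le_ofReal ((norm_sub_le _ _).trans (add_le_add (hB _) (hB _)))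
    gcongr

lemma eventually_poissonOsc_le {m : ℕ} (hm : 0 < m) {p : ℝ} (hp : 1 ≤ p)
    {h : Evec m → Evec m → ℝ} (hh : Measurable fun q : Evec m × Evec m => h q.1 q.2)
    (hfin : ∫⁻ ζ, (∫⁻ ω, ‖h ζ ω‖ₑ ^ p ∂(sphereM m)) ∂(sphereM m) < ⊤) {ε : ℝ} (hε : 0 < ε) :
    ∀ᶠ r in 𝓝[<] (1 : ℝ), poissonOsc m p h r ≤
      (2 ^ (p - 1)) ^ 2 * (2 * sphereM m Set.univ + sphereM m Set.univ ^ 3 + 1) *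
        ENNReal.ofReal ε := by
  have hp0 : 0 < p := by linarith
  obtain ⟨g, hgs, hgc, hgl⟩ := exists_continuous_approx hp hh hfin hε
  obtain ⟨δ, hδ, M, hMfin, hgnear, hgfar⟩ := exists_lintegral_sub_le hp0 hgs hgc hε
  have hsplit := lintegral_enorm_sub_rpow_le hp hh hgc.measurable
  have hψm : Measurable fun ζ => ∫⁻ ω, ‖h ζ ω - g (ζ, ω)‖ₑ ^ p ∂(sphereM m) := by
    have : Measurable fun q : Evec m × Evec m => ‖h q.1 q.2 - g (q.1, q.2)‖ₑ ^ p :=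
      ((hh.sub hgc.measurable).enorm).pow_const p
    exact this.lintegral_prod_right'
  generalize ((2 : ENNReal) ^ (p - 1)) ^ 2 = D at hsplit ⊢
  generalize hψ : (fun ζ => ∫⁻ ω, ‖h ζ ω - g (ζ, ω)‖ₑ ^ p ∂(sphereM m)) = ψ at hψm hgl
  simp only [fun ζ => congrFun hψ ζ] at hsplit
  have hWfin : sphereM m Set.univ ≠ ⊤ := measure_ne_top _ _
  generalize hW : sphereM m Set.univ = W at hgnear hWfin ⊢
  have hκ : Tendsto (fun r : ℝ => ENNReal.ofReal ((1 - r ^ 2) / (δ / 2) ^ m) * M * W ^ 2)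
      (𝓝[<] 1) (𝓝 0) := by
    have h1 : Tendsto (fun r : ℝ => (1 - r ^ 2) / (δ / 2) ^ m) (𝓝[<] 1) (𝓝 0) := by
      have : Continuous fun r : ℝ => (1 - r ^ 2) / (δ / 2) ^ m := by fun_prop
      simpa using (this.tendsto 1).mono_left nhdsWithin_le_nhds
    have h2 := (ENNReal.continuous_ofReal.tendsto 0).comp h1
    rw [ENNReal.ofReal_zero] at h2
    have h3 := ENNReal.Tendsto.mul_const h2 (Or.inr hMfin)
    rw [zero_mul] at h3
    have h4 := ENNReal.Tendsto.mul_const h3 (Or.inr (ENNReal.pow_ne_top (n := 2) hWfin))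
    rwa [zero_mul] at h4
  have hr0 : ∀ᶠ r in 𝓝[<] (1 : ℝ), 0 ≤ r :=
    nhdsWithin_le_nhds ((lt_mem_nhds one_pos).mono fun _ hx => le_of_lt hx)
  have hrδ : ∀ᶠ r in 𝓝[<] (1 : ℝ), 1 - r < δ / 2 := nhdsWithin_le_nhds
    ((lt_mem_nhds (show 1 - δ / 2 < 1 by linarith)).mono fun _ hx => by linarith)
  filter_upwards [self_mem_nhdsWithin, hr0, hrδ,
    ENNReal.tendsto_nhds_zero.1 hκ (ENNReal.ofReal ε) (by simpa using hε)] with r hr1 hr0 hrδ hκr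
  rw [Set.mem_Iio] at hr1
  have hwm : Measurable fun q : Evec m × Evec m => ENNReal.ofReal (poissonK m (r • q.1) q.2) :=
    ((measurable_poissonK m).comp
      ((measurable_fst.const_smul r).prodMk measurable_snd)).ennreal_ofReal
  have hmass : ∀ᵐ η ∂(sphereM m),
      ∫⁻ ζ, ENNReal.ofReal (poissonK m (r • η) ζ) ∂(sphereM m) = W := by
    filter_upwards [ae_norm_eq_one m] with η hη
    rw [← hW]
    exact lintegral_poissonK hm (by rw [norm_smul, hη, Real.norm_of_nonneg hr0]; linarith)
  have hmass' : ∀ᵐ ζ ∂(sphereM m),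
      ∫⁻ η, ENNReal.ofReal (poissonK m (r • η) ζ) ∂(sphereM m) = W := by
    filter_upwards [ae_norm_eq_one m, hmass] with ζ hζ hmζ
    rw [← hmζ]
    refine lintegral_congr_ae ?_
    filter_upwards [ae_norm_eq_one m] with η hη
    rw [poissonK_smul_comm r hη hζ]
  have hmain := lintegral_kernel_le (Φ := fun ζ η => ∫⁻ ω, ‖h ζ ω - h η ω‖ₑ ^ p ∂(sphereM m))
    (D := D) (e := ENNReal.ofReal ε * W) (K := ENNReal.ofReal ((1 - r ^ 2) / (δ / 2) ^ m) * M)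
    hwm hψm hW hmass hmass' (by
      filter_upwards [ae_norm_eq_one m] with η hη ζ
      refine mul_le_of_split (hsplit ζ η) ?_
      rcases lt_or_ge ‖ζ - η‖ δ with hd | hd
      · exact le_add_right (mul_le_mul_right (hgnear ζ η hd) _)
      · exact le_add_left (mul_le_mul' (ENNReal.ofReal_le_ofReal
          (poissonK_le_of_le_dist hr0 hr1 hδ hrδ hη hd)) (hgfar ζ η)))
  refine hmain.trans ?_
  calc _ ≤ D * (2 * W * ENNReal.ofReal ε + W ^ 2 * (ENNReal.ofReal ε * W) +
          ENNReal.ofReal ε) := by gcongr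
    _ = _ := by ring

lemma tendsto_poissonOsc {m : ℕ} (hm : 0 < m) {p : ℝ} (hp : 1 ≤ p)
    {h : Evec m → Evec m → ℝ} (hh : Measurable fun q : Evec m × Evec m => h q.1 q.2)
    (hfin : ∫⁻ ζ, (∫⁻ ω, ‖h ζ ω‖ₑ ^ p ∂(sphereM m)) ∂(sphereM m) < ⊤) :
    Tendsto (poissonOsc m p h) (𝓝[<] 1) (𝓝 0) := by
  set C : ENNReal := (2 ^ (p - 1)) ^ 2 *
    (2 * sphereM m Set.univ + sphereM m Set.univ ^ 3 + 1) with hC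
  have hCfin : C ≠ ⊤ := by
    have hW : sphereM m Set.univ ≠ ⊤ := measure_ne_top _ _
    refine ENNReal.mul_ne_top (ENNReal.pow_ne_top
      (ENNReal.rpow_ne_top_of_nonneg (by linarith) ENNReal.ofNat_ne_top)) ?_
    finiteness
  have hlim : Tendsto (fun ε : ℝ => C * ENNReal.ofReal ε) (𝓝[>] 0) (𝓝 0) := by
    have h1 := (ENNReal.continuous_ofReal.tendsto 0).mono_left
      (nhdsWithin_le_nhds (s := Set.Ioi (0 : ℝ)))
    have h2 := ENNReal.Tendsto.const_mul h1 (Or.inr hCfin)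
    simpa using h2
  rw [ENNReal.tendsto_nhds_zero]
  intro e he
  obtain ⟨ε, hεe, hε⟩ := ((ENNReal.tendsto_nhds_zero.1 hlim e he).and
    self_mem_nhdsWithin).exists
  filter_upwards [eventually_poissonOsc_le hm hp hh hfin hε] with r hr
  exact hr.trans hεe

/-! ### The bosonic Poisson integral -/

lemma exists_isometry_reflv {m : ℕ} (a : Evec m) :
    ∃ A : Evec m ≃ₗᵢ[ℝ] Evec m, (∀ u, A u = reflv a u) ∧ ∀ u, A (A u) = u := by
  refine ⟨(ℝ ∙ a)ᗮ.reflection, fun u => ?_, fun u => Submodule.reflection_reflection _ u⟩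
  rw [Submodule.reflection_orthogonal_apply, Submodule.reflection_singleton_apply, reflv]
  simp only [RCLike.ofReal_real_eq_id, id_eq]
  module

lemma reflv_smul {m : ℕ} {t : ℝ} (ht : t ≠ 0) (a u : Evec m) : reflv (t • a) u = reflv a u := by
  rcases eq_or_ne a 0 with rfl | ha
  · simp
  · have hn : ‖a‖ ≠ 0 := norm_ne_zero_iff.2 ha
    rw [reflv, reflv, real_inner_smul_left, norm_smul, mul_pow, Real.norm_eq_abs, sq_abs, smul_smul]
    congr 2
    field_simp

lemma measurable_reflv (m : ℕ) : Measurable fun q : Evec m × Evec m => reflv q.1 q.2 := by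
  unfold reflv
  fun_prop

lemma integral_poissonK_even {m : ℕ} (hm : 0 < m) {x : Evec m} (hx : ‖x‖ < 1) {F : Evec m → ℝ}
    (hF : Measurable F) (hF0 : ∀ t : ℝ, t ≠ 0 → ∀ z, F (t • z) = F z)
    (hint : Integrable F (sphereM m)) :
    Integrable (fun ζ => poissonK m x ζ * F (x - ζ)) (sphereM m) ∧
      ∫ ζ, poissonK m x ζ * F (x - ζ) ∂(sphereM m) = ∫ a, F a ∂(sphereM m) := by
  have hmeas : Measurable fun ζ => poissonK m x ζ * F (x - ζ) :=
    (measurable_poissonK_right x).mul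
      (hF.comp (measurable_const.sub measurable_id))
  have hI : Integrable (fun ζ => poissonK m x ζ * F (x - ζ)) (sphereM m) := by
    refine ⟨hmeas.aestronglyMeasurable, ?_⟩
    have h := lintegral_poissonK_even hm hx (G := fun z => ‖F z‖ₑ) hF.enorm
      (fun t ht z => by rw [hF0 t ht])
    rw [HasFiniteIntegral]
    simp only [enorm_mul, Real.enorm_of_nonneg (poissonK_nonneg hx _)]
    rw [h]
    exact hint.2
  refine ⟨hI, ?_⟩
  rw [integral_eq_lintegral_pos_part_sub_lintegral_neg_part hI,
    integral_eq_lintegral_pos_part_sub_lintegral_neg_part hint]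
  simp only [← mul_neg, ENNReal.ofReal_mul (poissonK_nonneg hx _)]
  rw [lintegral_poissonK_even hm hx (G := fun z => ENNReal.ofReal (F z)) hF.ennreal_ofReal
      (fun t ht z => by rw [hF0 t ht]),
    lintegral_poissonK_even hm hx (G := fun z => ENNReal.ofReal (-F z)) hF.neg.ennreal_ofReal
      (fun t ht z => by rw [hF0 t ht])]

/-- The Poisson integral reproduces functions that do not depend on the boundary point. -/
lemma integral_poissonK_reflv {m k : ℕ} (hm : 3 ≤ m) {q : Evec m → ℝ} (hq : IsHk m k q)
    {x ν : Evec m} (hx : ‖x‖ < 1) (hν : ‖ν‖ = 1) :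
    Integrable (fun ζ => cmk m k / 2 * (poissonK m x ζ * q (reflv (x - ζ) ν))) (sphereM m) ∧
      ∫ ζ, cmk m k / 2 * (poissonK m x ζ * q (reflv (x - ζ) ν)) ∂(sphereM m) = q ν := by
  obtain ⟨P, hP, hL, rfl⟩ := hq.exists_polyFun
  have hF : Measurable fun a => polyFun P (reflv a ν) :=
    (continuous_polyFun P).measurable.comp ((measurable_reflv m).comp measurable_prodMk_right)
  have hint : Integrable (fun a => polyFun P (reflv a ν)) (sphereM m) := by
    obtain ⟨C, hC⟩ := exists_polyFun_bound hP
    refine Integrable.of_bound hF.aestronglyMeasurable C (Eventually.of_forall fun a => ?_)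
    have := hC (reflv a ν)
    rwa [norm_reflv, hν, one_pow, mul_one] at this
  obtain ⟨hI, hE⟩ := integral_poissonK_even (by omega) hx hF
    (fun t ht z => by rw [reflv_smul ht]) hint
  refine ⟨hI.const_mul _, ?_⟩
  rw [integral_const_mul, hE]
  have h := integral_polyFun_reflv hm hν hP hL
  have hω : 0 < omegaS m := omegaS_pos (by omega)
  have hm3 : (3 : ℝ) ≤ m := by exact_mod_cast hm
  have hm2 : (m : ℝ) - 2 ≠ 0 := by
    have : 0 < (m : ℝ) - 2 := by linarith
    exact this.ne'
  rw [cmk]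
  field_simp
  linear_combination h

/-- Integrating the Poisson kernel in the second variable evaluates `h ζ` at a reflected point. -/
lemma integral_PB_mul {m k : ℕ} {Z : Evec m → Evec m → ℝ} (hZ : IsZk m k Z)
    {f q : Evec m → ℝ} (hq : IsHk m k q) (hf : ∀ ω ∈ closedBall (0 : Evec m) 1, f ω = q ω)
    (x ζ : Evec m) {ν : Evec m} (hν : ‖ν‖ = 1) :
    ∫ ω, PB m k Z x ζ ω ν * f ω ∂(sphereM m) =
      cmk m k / 2 * (poissonK m x ζ * f (reflv (x - ζ) ν)) := by
  obtain ⟨A, hA, hAA⟩ := exists_isometry_reflv (x - ζ)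
  have h1 : ∀ᵐ ω ∂(sphereM m), PB m k Z x ζ ω ν * f ω =
      cmk m k / 2 * poissonK m x ζ * (Z ω (reflv (x - ζ) ν) * q ω) := by
    filter_upwards [ae_norm_eq_one m] with ω hω
    have h2 : Z (reflv (x - ζ) ω) ν = Z ω (reflv (x - ζ) ν) := by
      rw [← hA, ← hA, ← hZ.2.2.2.2 A ω (A ν), hAA]
    rw [PB, poissonK, h2, hf ω (by simp [hω])]
    ring
  rw [integral_congr_ae h1, integral_const_mul, hZ.2.1 q hq, hf _ (by simp [norm_reflv, hν])]
  ring

lemma enorm_integral_sub_integral_le {α : Type*} [MeasurableSpace α] {μ : Measure α}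
    {f g : α → ℝ} (hf : AEStronglyMeasurable f μ) (hg : Integrable g μ) :
    ‖(∫ x, f x ∂μ) - ∫ x, g x ∂μ‖ₑ ≤ ∫⁻ x, ‖f x - g x‖ₑ ∂μ := by
  by_cases hfi : Integrable f μ
  · rw [← integral_sub hfi hg]
    exact enorm_integral_le_lintegral_enorm _
  · have : ∫⁻ x, ‖f x - g x‖ₑ ∂μ = ⊤ := by
      by_contra hne
      refine hfi ?_
      have hd : Integrable (fun x => f x - g x) μ := ⟨hf.sub hg.1, lt_top_iff_ne_top.2 hne⟩
      refine (hd.add hg).congr (Eventually.of_forall fun x => ?_)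
      simp
    rw [this]
    exact le_top

/-- Jensen's inequality for a finite weight. -/
lemma rpow_lintegral_mul_le {α : Type*} [MeasurableSpace α] {μ : Measure α} {p : ℝ} (hp : 1 ≤ p)
    {w : α → ENNReal} (hw : Measurable w) {f : α → ℝ} (hf : Measurable f) :
    (∫⁻ x, w x * ‖f x‖ₑ ∂μ) ^ p ≤
      (∫⁻ x, w x ∂μ) ^ (p - 1) * ∫⁻ x, w x * ‖f x‖ₑ ^ p ∂μ := by
  have hp0 : 0 < p := by linarith
  have h := eLpNorm'_le_eLpNorm'_mul_rpow_measure_univ one_pos hp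
    (hf.aestronglyMeasurable (μ := μ.withDensity w))
  simp only [eLpNorm', ENNReal.rpow_one, div_one] at h
  rw [lintegral_withDensity_eq_lintegral_mul _ hw hf.enorm,
    lintegral_withDensity_eq_lintegral_mul _ hw (hf.enorm.pow_const p),
    withDensity_apply _ MeasurableSet.univ, Measure.restrict_univ] at h
  refine (ENNReal.rpow_le_rpow h hp0.le).trans_eq ?_
  rw [ENNReal.mul_rpow_of_nonneg _ _ hp0.le, ← ENNReal.rpow_mul, ← ENNReal.rpow_mul,
    show 1 / p * p = 1 by field_simp, show (1 - 1 / p) * p = p - 1 by field_simp,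
    ENNReal.rpow_one, mul_comm]
  rfl

lemma enorm_PBint_sub_rpow_le {m k : ℕ} (hm : 3 ≤ m) {Z : Evec m → Evec m → ℝ}
    (hZ : IsZk m k Z) {p : ℝ} (hp : 1 ≤ p) {h : Evec m → Evec m → ℝ} (hh : MemLpS m k p h)
    {x η ν : Evec m} (hx : ‖x‖ < 1) (hη : ‖η‖ = 1) (hν : ‖ν‖ = 1) :
    ‖PBint m k Z h x ν - h η ν‖ₑ ^ p ≤
      ‖cmk m k / 2‖ₑ ^ p * sphereM m Set.univ ^ (p - 1) *
        ∫⁻ ζ, ENNReal.ofReal (poissonK m x ζ) *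
          ‖h ζ (reflv (x - ζ) ν) - h η (reflv (x - ζ) ν)‖ₑ ^ p ∂(sphereM m) := by
  have hp0 : 0 < p := by linarith
  obtain ⟨hmeas, hHk, -⟩ := hh
  have hR : Measurable fun ζ => reflv (x - ζ) ν :=
    (measurable_reflv m).comp ((measurable_const.sub measurable_id).prodMk measurable_const)
  have hpm := measurable_poissonK_right x
  have hm1 : Measurable fun ζ => h ζ (reflv (x - ζ) ν) := hmeas.comp (measurable_id.prodMk hR)
  have hm2 : Measurable fun ζ => h η (reflv (x - ζ) ν) := hmeas.comp (measurable_const.prodMk hR)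
  have hP : PBint m k Z h x ν =
      ∫ ζ, cmk m k / 2 * (poissonK m x ζ * h ζ (reflv (x - ζ) ν)) ∂(sphereM m) := by
    refine integral_congr_ae ?_
    filter_upwards [ae_norm_eq_one m] with ζ hζ
    obtain ⟨q, hq, hqe⟩ := hHk ζ hζ
    exact integral_PB_mul hZ hq hqe x ζ hν
  obtain ⟨q, hq, hqe⟩ := hHk η hη
  obtain ⟨hI, hE⟩ := integral_poissonK_reflv hm hq hx hν
  have hqe' : ∀ ζ, q (reflv (x - ζ) ν) = h η (reflv (x - ζ) ν) := fun ζ =>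
    (hqe _ (by simp [norm_reflv, hν])).symm
  simp only [hqe'] at hI hE
  rw [hqe ν (by simp [hν]), hP, ← hE]
  have hb := enorm_integral_sub_integral_le
    ((hpm.mul hm1).const_mul (cmk m k / 2)).aestronglyMeasurable hI
  have hpt : ∀ ζ, ‖cmk m k / 2 * (poissonK m x ζ * h ζ (reflv (x - ζ) ν)) -
      cmk m k / 2 * (poissonK m x ζ * h η (reflv (x - ζ) ν))‖ₑ =
      ‖cmk m k / 2‖ₑ * (ENNReal.ofReal (poissonK m x ζ) *
        ‖h ζ (reflv (x - ζ) ν) - h η (reflv (x - ζ) ν)‖ₑ) := by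
    intro ζ
    rw [← Real.enorm_of_nonneg (poissonK_nonneg hx ζ), ← enorm_mul, ← enorm_mul]
    congr 1
    ring
  refine (ENNReal.rpow_le_rpow hb hp0.le).trans ?_
  simp only [Pi.mul_apply, hpt]
  rw [lintegral_const_mul' _ _ enorm_ne_top,
    ENNReal.mul_rpow_of_nonneg _ _ hp0.le, mul_assoc, ← lintegral_poissonK (by omega) hx]
  gcongr
  exact rpow_lintegral_mul_le hp hpm.ennreal_ofReal (hm1.sub hm2)

lemma lintegral_enorm_PBint_sub_le {m k : ℕ} (hm : 3 ≤ m) {Z : Evec m → Evec m → ℝ}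
    (hZ : IsZk m k Z) {p : ℝ} (hp : 1 ≤ p) {h : Evec m → Evec m → ℝ} (hh : MemLpS m k p h)
    {r : ℝ} (hr0 : 0 ≤ r) (hr1 : r < 1) :
    ∫⁻ η, (∫⁻ ν, ‖PBint m k Z h (r • η) ν - h η ν‖ₑ ^ p ∂(sphereM m)) ∂(sphereM m) ≤
      ‖cmk m k / 2‖ₑ ^ p * sphereM m Set.univ ^ (p - 1) * poissonOsc m p h r := by
  have hp0 : 0 < p := by linarith
  have hmeas := hh.1
  have hCfin : ‖cmk m k / 2‖ₑ ^ p * sphereM m Set.univ ^ (p - 1) ≠ ⊤ :=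
    ENNReal.mul_ne_top (ENNReal.rpow_ne_top_of_nonneg hp0.le enorm_ne_top)
      (ENNReal.rpow_ne_top_of_nonneg (by linarith) (measure_ne_top _ _))
  rw [poissonOsc, ← lintegral_const_mul' _ _ hCfin]
  refine lintegral_mono_ae ?_
  filter_upwards [ae_norm_eq_one m] with η hη
  have hx : ‖r • η‖ < 1 := by rw [norm_smul, hη, Real.norm_of_nonneg hr0]; linarith
  have h1 : ∫⁻ ν, ‖PBint m k Z h (r • η) ν - h η ν‖ₑ ^ p ∂(sphereM m) ≤
      ∫⁻ ν, ‖cmk m k / 2‖ₑ ^ p * sphereM m Set.univ ^ (p - 1) *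
        (∫⁻ ζ, ENNReal.ofReal (poissonK m (r • η) ζ) *
          ‖h ζ (reflv (r • η - ζ) ν) - h η (reflv (r • η - ζ) ν)‖ₑ ^ p ∂(sphereM m))
        ∂(sphereM m) := by
    refine lintegral_mono_ae ?_
    filter_upwards [ae_norm_eq_one m] with ν hν
    exact enorm_PBint_sub_rpow_le hm hZ hp hh hx hη hν
  refine h1.trans_eq ?_
  rw [lintegral_const_mul' _ _ hCfin]
  congr 1
  have hR : Measurable fun s : Evec m × Evec m => reflv (r • η - s.2) s.1 :=
    (measurable_reflv m).comp ((measurable_const.sub measurable_snd).prodMk measurable_fst)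
  have hpm := measurable_poissonK_right (r • η)
  have hjoint : Measurable fun s : Evec m × Evec m => ENNReal.ofReal (poissonK m (r • η) s.2) *
      ‖h s.2 (reflv (r • η - s.2) s.1) - h η (reflv (r • η - s.2) s.1)‖ₑ ^ p :=
    (hpm.comp measurable_snd).ennreal_ofReal.mul
      (((hmeas.comp (measurable_snd.prodMk hR)).sub
        (hmeas.comp (measurable_const.prodMk hR))).enorm.pow_const p)
  rw [lintegral_lintegral_swap hjoint.aemeasurable]
  refine lintegral_congr fun ζ => ?_
  rw [lintegral_const_mul' _ _ ENNReal.ofReal_ne_top]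
  congr 1
  obtain ⟨A, hA, -⟩ := exists_isometry_reflv (r • η - ζ)
  have hf : Measurable fun ω => ‖h ζ ω - h η ω‖ₑ ^ p :=
    ((hmeas.comp measurable_prodMk_left).sub
      (hmeas.comp measurable_prodMk_left)).enorm.pow_const p
  rw [← lintegral_sphereM_comp_isometry (by omega) A hf]
  simp only [hA]

/-- `L^p` boundary convergence of the unit-ball Poisson integral. -/
theorem stmt_11 (m k : ℕ) (hm : 3 ≤ m) (hk : 1 ≤ k)
    (Z : Evec m → Evec m → ℝ) (hZ : IsZk m k Z)
    (p : ℝ) (hp : 1 ≤ p)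
    (h : Evec m → Evec m → ℝ) (hh : MemLpS m k p h) :
    Tendsto (fun r : ℝ => lpS m p (fun η ν => PBint m k Z h (r • η) ν - h η ν))
      (𝓝[<] (1 : ℝ)) (𝓝 0) := by
  have hp0 : 0 < p := by linarith
  have henorm : ∀ t : ℝ, ENNReal.ofReal (|t| ^ p) = ‖t‖ₑ ^ p := by
    intro t
    rw [Real.enorm_eq_ofReal_abs, ENNReal.ofReal_rpow_of_nonneg (abs_nonneg t) hp0.le]
  have hfin : ∫⁻ ζ, (∫⁻ ω, ‖h ζ ω‖ₑ ^ p ∂(sphereM m)) ∂(sphereM m) < ⊤ := by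
    have h1 := hh.2.2
    simp only [lpS, henorm] at h1
    rwa [ENNReal.rpow_lt_top_iff_of_pos (by positivity)] at h1
  have hosc := tendsto_poissonOsc (by omega) hp hh.1 hfin
  have hCfin : ‖cmk m k / 2‖ₑ ^ p * sphereM m Set.univ ^ (p - 1) ≠ ⊤ :=
    ENNReal.mul_ne_top (ENNReal.rpow_ne_top_of_nonneg hp0.le enorm_ne_top)
      (ENNReal.rpow_ne_top_of_nonneg (by linarith) (measure_ne_top _ _))
  have hC := ENNReal.Tendsto.const_mul hosc (Or.inr hCfin)
  rw [mul_zero] at hC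
  have hr0 : ∀ᶠ r in 𝓝[<] (1 : ℝ), 0 ≤ r :=
    nhdsWithin_le_nhds ((lt_mem_nhds one_pos).mono fun _ hx => le_of_lt hx)
  have hpow : Tendsto (fun r : ℝ => ∫⁻ η, (∫⁻ ν, ‖PBint m k Z h (r • η) ν - h η ν‖ₑ ^ p
      ∂(sphereM m)) ∂(sphereM m)) (𝓝[<] 1) (𝓝 0) := by
    refine tendsto_of_tendsto_of_tendsto_of_le_of_le' tendsto_const_nhds hC
      (Eventually.of_forall fun _ => zero_le) ?_
    filter_upwards [self_mem_nhdsWithin, hr0] with r hr1 hr0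
    exact lintegral_enorm_PBint_sub_le hm hZ hp hh hr0 hr1
  have hlim := hpow.ennrpow_const (1 / p)
  rw [ENNReal.zero_rpow_of_pos (by positivity)] at hlim
  simpa only [lpS, henorm] using hlim
end
end
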